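/- (Sparse bilinear bound for intermediate layers at random initialization.) There exist absolute constants C, c > 0 such that if m ≥ C·n·L·log(n·L), then for any integer s with 1 ≤ s ≤ m/(C·L·log m), with probability at least 1 − e^{−c·s·log m} over the random matrices A and W_1,…,W_L: for all i ∈ [n], all 1 ≤ a ≤ b ≤ L, and all vectors u, v ∈ ℝ^m each having at most s nonzero entries, |uᵀ W_b D_{i,b−1} W_{b−1} ⋯ D_{i,a} W_a v| ≤ C·‖u‖·‖v‖·√((s·log m)/m). -/

import Mathlib

/-!
The proof is the moment method, with moments of order `p ≈ s log m`.

*One layer.* For fixed `h ≠ 0` and `y`, a row `w` of a Gaussian matrix contributes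
`1[⟨w, h⟩ ≥ 0] ⟨w, y⟩²` to `‖D W y‖²`, where `D` is the sign pattern of `W h`. Since `w` and `-w` have
the same law and almost surely exactly one of them opens the gate, the exponential moment of this
contribution is the average of `1` and the exponential moment of `⟨w, y⟩²` (`row_exp_le`). The rows are
independent, and `X^p ≤ e^(-p) e^(pX)` yields `E ‖D W y‖^(2p) ≤ e^(8p²/m) ‖y‖^(2p)` (`layer_moment`).

*The product of layers.* The matrices are integrated out from the last layer to the first
(`lintegral_pi_step`): `uᵀ W_b y` is Gaussian given the earlier layers, and each gated layer costs a
factor `e^(8p²/m)` (`chain_moment`, `bilin_moment`). Markov's inequality gives `tail_bound`. With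
`p ≤ 2 s log m ≤ 2 m / (C L)`, all `L` layers together cost at most `e^p`.

*Vanishing activations.* The one-layer bound requires a nonzero activation vector. A layer maps a
nonzero vector to zero with probability at most `2⁻ᵐ`, so this fails with probability at most
`(L + 1) 2⁻ᵐ` per sample (`zero_prob`).

*From fixed to all sparse vectors.* Sparse vectors of the unit ball are rounded towards zero to
multiples of `1 / m`. The error is sparse, of norm at most `1 / 4`, so the supremum `K` of the form over
the sparse unit ball satisfies `K ≤ B + K / 2`, with `B` the bound on the grid (`net_bound`). There are
at most `(m (2m + 1))^(2s) ≤ e^(6 s log m)` pairs of grid vectors, and a union bound concludes.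
-/

open MeasureTheory ProbabilityTheory

noncomputable section

namespace DNNPaper

/-! ### Elementary linear algebra on plain function matrices -/

def mulVec {p q : ℕ} (M : Fin p → Fin q → ℝ) (v : Fin q → ℝ) : Fin p → ℝ :=
  fun i => ∑ j, M i j * v j

def mmul {p q r : ℕ} (M : Fin p → Fin q → ℝ) (N : Fin q → Fin r → ℝ) :
    Fin p → Fin r → ℝ :=
  fun i k => ∑ j, M i j * N j k

def transpose {p q : ℕ} (M : Fin p → Fin q → ℝ) : Fin q → Fin p → ℝ :=
  fun j i => M i j

def dot {p : ℕ} (u v : Fin p → ℝ) : ℝ := ∑ i, u i * v i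

def outer {p q : ℕ} (u : Fin p → ℝ) (v : Fin q → ℝ) : Fin p → Fin q → ℝ :=
  fun i j => u i * v j

def idMat (p : ℕ) : Fin p → Fin p → ℝ := fun i j => if i = j then 1 else 0

def diagMat {p : ℕ} (dg : Fin p → ℝ) : Fin p → Fin p → ℝ :=
  fun i j => if i = j then dg i else 0

def relu {p : ℕ} (v : Fin p → ℝ) : Fin p → ℝ := fun k => max (v k) 0

/-- diagonal entries of the ReLU sign matrix of a pre-activation vector -/
def signOf {p : ℕ} (g : Fin p → ℝ) : Fin p → ℝ := fun k => if 0 ≤ g k then 1 else 0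

/-- Euclidean norm -/
def l2 {p : ℕ} (v : Fin p → ℝ) : ℝ := Real.sqrt (∑ k, v k ^ 2)

/-- max-norm -/
def linf {p : ℕ} (v : Fin p → ℝ) : ℝ := ⨆ k, |v k|

/-- number of nonzero entries -/
def l0 {p : ℕ} (v : Fin p → ℝ) : ℕ := (Finset.univ.filter fun k => v k ≠ 0).card

/-- Frobenius norm -/
def frob {p q : ℕ} (M : Fin p → Fin q → ℝ) : ℝ := Real.sqrt (∑ i, ∑ j, M i j ^ 2)

/-- spectral norm (ℓ₂ operator norm) -/
def spec {p q : ℕ} (M : Fin p → Fin q → ℝ) : ℝ :=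
  sSup {r | ∃ v : Fin q → ℝ, l2 v ≤ 1 ∧ r = l2 (mulVec M v)}

/-- trace (Frobenius) inner product -/
def innerF {p q : ℕ} (M N : Fin p → Fin q → ℝ) : ℝ := ∑ i, ∑ j, M i j * N i j

/-- `‖W‖₂ = max_ℓ ‖W_ℓ‖₂` for a tuple of matrices -/
def tupleSpec {m L : ℕ} (W : Fin L → Fin m → Fin m → ℝ) : ℝ := ⨆ ℓ, spec (W ℓ)

/-! ### The network -/

variable {𝔡 m d L : ℕ}

/-- `Wat W ℓ` is the weight matrix of layer `ℓ ∈ {1,…,L}` (identity outside this range). -/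
def Wat (W : Fin L → Fin m → Fin m → ℝ) (ℓ : ℕ) : Fin m → Fin m → ℝ :=
  if h : 1 ≤ ℓ ∧ ℓ ≤ L then W ⟨ℓ - 1, by omega⟩ else idMat m

/-- the forward (post-activation) vectors `h_ℓ`, `ℓ = 0,1,…,L` -/
def hseq (A : Fin m → Fin 𝔡 → ℝ) (W : Fin L → Fin m → Fin m → ℝ) (x : Fin 𝔡 → ℝ) :
    ℕ → Fin m → ℝ
  | 0 => relu (mulVec A x)
  | ℓ + 1 =>
      if ℓ + 1 ≤ L then relu (mulVec (Wat W (ℓ + 1)) (hseq A W x ℓ)) else hseq A W x ℓ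

/-- the pre-activation vectors `g_ℓ`, `ℓ = 0,1,…,L` -/
def gseq (A : Fin m → Fin 𝔡 → ℝ) (W : Fin L → Fin m → Fin m → ℝ) (x : Fin 𝔡 → ℝ) :
    ℕ → Fin m → ℝ
  | 0 => mulVec A x
  | ℓ + 1 => mulVec (Wat W (ℓ + 1)) (hseq A W x ℓ)

/-- `chainProd W Dfun a b = (D_b W_b) (D_{b-1} W_{b-1}) ⋯ (D_a W_a)` where `D_ℓ` is the
diagonal matrix with entries `Dfun ℓ`; it is the identity when `b < a`, and factors with
index outside `{1,…,L}` are skipped. -/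
def chainProd (W : Fin L → Fin m → Fin m → ℝ) (Dfun : ℕ → Fin m → ℝ) (a : ℕ) :
    ℕ → Fin m → Fin m → ℝ
  | 0 => idMat m
  | b + 1 =>
      if a ≤ b + 1 ∧ b + 1 ≤ L then
        mmul (mmul (diagMat (Dfun (b + 1))) (Wat W (b + 1))) (chainProd W Dfun a b)
      else chainProd W Dfun a b

/-- `prodDW A W x a b = D_b W_b D_{b-1} W_{b-1} ⋯ D_a W_a` with the sign matrices of input `x` -/
def prodDW (A : Fin m → Fin 𝔡 → ℝ) (W : Fin L → Fin m → Fin m → ℝ) (x : Fin 𝔡 → ℝ)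
    (a b : ℕ) : Fin m → Fin m → ℝ :=
  chainProd W (fun ℓ => signOf (gseq A W x ℓ)) a b

/-- `Back_ℓ = B D_L W_L ⋯ D_ℓ W_ℓ` (equal to `B` for `ℓ = L+1`) -/
def backMat (B : Fin d → Fin m → ℝ) (A : Fin m → Fin 𝔡 → ℝ)
    (W : Fin L → Fin m → Fin m → ℝ) (x : Fin 𝔡 → ℝ) (ℓ : ℕ) : Fin d → Fin m → ℝ :=
  mmul B (prodDW A W x ℓ L)

/-- formula gradient w.r.t. `W_ℓ` with an arbitrary (fake) loss vector `v`:
`D_ℓ (Back_{ℓ+1}ᵀ v) h_{ℓ-1}ᵀ` -/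
def gradW (B : Fin d → Fin m → ℝ) (A : Fin m → Fin 𝔡 → ℝ)
    (W : Fin L → Fin m → Fin m → ℝ) (x : Fin 𝔡 → ℝ) (v : Fin d → ℝ) (ℓ : ℕ) :
    Fin m → Fin m → ℝ :=
  outer (mulVec (diagMat (signOf (gseq A W x ℓ)))
      (mulVec (transpose (backMat B A W x (ℓ + 1))) v))
    (hseq A W x (ℓ - 1))

/-- loss vector `B h_L − y` -/
def lossVec (B : Fin d → Fin m → ℝ) (A : Fin m → Fin 𝔡 → ℝ)
    (W : Fin L → Fin m → Fin m → ℝ) (x : Fin 𝔡 → ℝ) (y : Fin d → ℝ) : Fin d → ℝ :=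
  fun j => mulVec B (hseq A W x L) j - y j

/-- per-sample ℓ₂ regression loss `F_i` -/
def objFi (B : Fin d → Fin m → ℝ) (A : Fin m → Fin 𝔡 → ℝ)
    (W : Fin L → Fin m → Fin m → ℝ) (x : Fin 𝔡 → ℝ) (y : Fin d → ℝ) : ℝ :=
  (1 / 2) * l2 (lossVec B A W x y) ^ 2

/-- total objective `F` -/
def objF {n : ℕ} (B : Fin d → Fin m → ℝ) (A : Fin m → Fin 𝔡 → ℝ)
    (W : Fin L → Fin m → Fin m → ℝ) (x : Fin n → Fin 𝔡 → ℝ)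
    (y : Fin n → Fin d → ℝ) : ℝ :=
  ∑ i, objFi B A W (x i) (y i)

/-- formula gradient of the total objective w.r.t. `W_ℓ` -/
def gradF {n : ℕ} (B : Fin d → Fin m → ℝ) (A : Fin m → Fin 𝔡 → ℝ)
    (W : Fin L → Fin m → Fin m → ℝ) (x : Fin n → Fin 𝔡 → ℝ)
    (y : Fin n → Fin d → ℝ) (ℓ : ℕ) : Fin m → Fin m → ℝ :=
  ∑ i, gradW B A W (x i) (lossVec B A W (x i) (y i)) ℓ

/-! ### Random initialization -/

/-- a `p × q` random matrix with i.i.d. `N(0, v)` entries -/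
def gaussMat (p q : ℕ) (v : NNReal) : Measure (Fin p → Fin q → ℝ) :=
  Measure.pi fun _ => Measure.pi fun _ => gaussianReal 0 v

/-- joint law of `(A, W)` at random initialization -/
def initAW (𝔡 m L : ℕ) :
    Measure ((Fin m → Fin 𝔡 → ℝ) × (Fin L → Fin m → Fin m → ℝ)) :=
  (gaussMat m 𝔡 (2 / m)).prod (Measure.pi fun _ : Fin L => gaussMat m m (2 / m))

/-- joint law of `(A, W, B)` at random initialization -/
def initMeasure (𝔡 m d L : ℕ) :
    Measure ((Fin m → Fin 𝔡 → ℝ) ×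
      (Fin L → Fin m → Fin m → ℝ) × (Fin d → Fin m → ℝ)) :=
  (gaussMat m 𝔡 (2 / m)).prod
    ((Measure.pi fun _ : Fin L => gaussMat m m (2 / m)).prod (gaussMat d m (1 / d)))

/-! ### Integration over product measures and Gaussian vectors -/

theorem lintegral_pi_prod {q : ℕ} {X : Type*} [MeasurableSpace X] (ν : Measure X)
    [IsProbabilityMeasure ν] (f : Fin q → X → ENNReal) (hf : ∀ k, Measurable (f k)) :
    ∫⁻ w, ∏ k, f k (w k) ∂(Measure.pi fun _ : Fin q => ν) = ∏ k, ∫⁻ x, f k x ∂ν := by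
  have h := lintegral_prod_eq_prod_lintegral_of_indepFun Finset.univ
    (fun k (w : Fin q → X) => f k (w k))
    (iIndepFun_pi (μ := fun _ : Fin q => ν) (X := f) fun k => (hf k).aemeasurable)
    (fun k => (hf k).comp (measurable_pi_apply k))
  rw [h]
  refine Finset.prod_congr rfl fun k _ => ?_
  exact (measurePreserving_eval (fun _ : Fin q => ν) k).lintegral_comp (hf k)

/-- One coordinate of a product measure may be integrated out first: if integrating `f` over the
`j`-th coordinate gives at most `g`, and `g` ignores that coordinate, then `∫ f ≤ ∫ g`. This is how
the layers are integrated one at a time, without conditional expectations. -/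
theorem lintegral_pi_step {L : ℕ} {X : Type*} [MeasurableSpace X] (ν : Measure X)
    [IsProbabilityMeasure ν] (j : Fin L) (f g : (Fin L → X) → ENNReal)
    (hf : Measurable f) (hg : Measurable g) (hgj : ∀ W w, g (Function.update W j w) = g W)
    (h : ∀ W, ∫⁻ w, f (Function.update W j w) ∂ν ≤ g W) :
    ∫⁻ W, f W ∂(Measure.pi fun _ : Fin L => ν) ≤ ∫⁻ W, g W ∂(Measure.pi fun _ : Fin L => ν) := by
  refine lintegral_le_of_lmarginal_le {j} hf hg ?_
  rw [lmarginal_singleton, lmarginal_singleton]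
  intro W
  simpa [hgj] using h W

/-- A linear form in i.i.d. centred Gaussians is Gaussian, by comparison of characteristic
functions. -/
theorem dot_law {q : ℕ} (v : NNReal) (y : Fin q → ℝ) :
    (Measure.pi fun _ : Fin q => gaussianReal 0 v).map (fun w => ∑ j, w j * y j) =
      gaussianReal 0 (v * (∑ j, y j ^ 2).toNNReal) := by
  have hmeas : Measurable (fun w : Fin q → ℝ => ∑ j, w j * y j) := by fun_prop
  have : IsProbabilityMeasure ((Measure.pi fun _ : Fin q => gaussianReal 0 v).map
    (fun w => ∑ j, w j * y j)) := Measure.isProbabilityMeasure_map hmeas.aemeasurable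
  apply Measure.ext_of_charFun
  ext t
  rw [charFun_gaussianReal, charFun_apply_real, integral_map hmeas.aemeasurable (by fun_prop)]
  have h1 : ∀ w : Fin q → ℝ, Complex.exp (↑t * ↑(∑ j, w j * y j) * Complex.I) =
      ∏ j, Complex.exp (↑(t * y j) * ↑(w j) * Complex.I) := by
    intro w
    rw [← Complex.exp_sum]
    congr 1
    push_cast
    rw [Finset.mul_sum, Finset.sum_mul]
    refine Finset.sum_congr rfl fun j _ => by ring
  simp_rw [h1]
  rw [integral_fintype_prod_eq_prod (f := fun j (x : ℝ) =>
    Complex.exp (↑(t * y j) * ↑x * Complex.I))]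
  have h2 : ∀ j, ∫ x : ℝ, Complex.exp (↑(t * y j) * ↑x * Complex.I) ∂(gaussianReal 0 v) =
      Complex.exp (-(v * (t * y j) ^ 2 / 2 : ℝ)) := by
    intro j
    rw [← charFun_apply_real, charFun_gaussianReal]
    push_cast
    ring_nf
  simp_rw [h2]
  rw [← Complex.exp_sum]
  congr 1
  have h3 : 0 ≤ ∑ j, y j ^ 2 := Finset.sum_nonneg fun j _ => sq_nonneg _
  rw [NNReal.coe_mul, Real.coe_toNNReal _ h3]
  push_cast
  simp only [mul_zero, zero_mul, zero_sub, Finset.mul_sum, Finset.sum_div, Finset.sum_mul,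
    Finset.sum_neg_distrib]
  congr 1
  refine Finset.sum_congr rfl fun j _ => by ring

theorem gaussian_exp_sq (v : NNReal) (l : ℝ) (h : 2 * l * v < 1) :
    ∫⁻ x, ENNReal.ofReal (Real.exp (l * x ^ 2)) ∂(gaussianReal 0 v) =
      ENNReal.ofReal (1 / Real.sqrt (1 - 2 * l * v)) := by
  by_cases hv : v = 0
  · subst hv
    simp
  have hv' : (0:ℝ) < v := by positivity
  set d : ℝ := 1 - 2 * l * v with hd
  have hd0 : 0 < d := by linarith
  have hw0 : (0:ℝ) < v / d := by positivity
  set w : NNReal := (v / d : ℝ).toNNReal with hw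
  have hwv : (w : ℝ) = v / d := Real.coe_toNNReal _ hw0.le
  have hwne : w ≠ 0 := by
    intro h0
    rw [h0] at hwv
    simp only [NNReal.coe_zero] at hwv
    linarith
  rw [gaussianReal_of_var_ne_zero _ hv, lintegral_withDensity_eq_lintegral_mul _
    (measurable_gaussianPDF 0 v) (by fun_prop)]
  have key : ∀ x : ℝ, (gaussianPDF 0 v * fun x => ENNReal.ofReal (Real.exp (l * x ^ 2))) x =
      ENNReal.ofReal (1 / Real.sqrt d) * gaussianPDF 0 w x := by
    intro x
    simp only [Pi.mul_apply, gaussianPDF]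
    rw [← ENNReal.ofReal_mul (gaussianPDFReal_nonneg _ _ _), ← ENNReal.ofReal_mul (by positivity)]
    congr 1
    simp only [gaussianPDFReal, hwv]
    rw [mul_assoc, ← Real.exp_add, ← mul_assoc]
    congr 1
    · rw [show 2 * Real.pi * (v / d) = (2 * Real.pi * v) / d by ring, Real.sqrt_div (by positivity)]
      have : Real.sqrt d ≠ 0 := by positivity
      field_simp
    · congr 1
      field_simp
      rw [hd]
      ring
  simp_rw [key]
  rw [lintegral_const_mul _ (measurable_gaussianPDF 0 w), lintegral_gaussianPDF_eq_one 0 hwne,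
    mul_one]

/-- A vector of i.i.d. centred Gaussians has a symmetric law. -/
theorem gaussVec_neg (q : ℕ) (v : NNReal) :
    MeasurePreserving (fun w : Fin q → ℝ => -w) (Measure.pi fun _ : Fin q => gaussianReal 0 v)
      (Measure.pi fun _ : Fin q => gaussianReal 0 v) := by
  refine ⟨measurable_neg, ?_⟩
  have h : (gaussianReal 0 v).map (fun x => -x) = gaussianReal 0 v := by
    simpa using gaussianReal_map_neg (μ := 0) (v := v)
  have := Measure.pi_map_pi (μ := fun _ : Fin q => gaussianReal 0 v)
    (f := fun (_ : Fin q) (x : ℝ) => -x) (hμ := fun _ => by rw [h]; infer_instance)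
    (fun _ => measurable_neg.aemeasurable)
  simp only [h] at this
  exact this

theorem dot_ne_zero_ae {q : ℕ} (v : NNReal) (hv : v ≠ 0) (h : Fin q → ℝ) (hh : h ≠ 0) :
    ∀ᵐ w ∂(Measure.pi fun _ : Fin q => gaussianReal 0 v), ∑ j, w j * h j ≠ 0 := by
  have hmeas : Measurable (fun w : Fin q → ℝ => ∑ j, w j * h j) := by fun_prop
  have hpos : 0 < ∑ j, h j ^ 2 := by
    obtain ⟨j, hj⟩ := Function.ne_iff.mp hh
    exact Finset.sum_pos' (fun _ _ => sq_nonneg _) ⟨j, Finset.mem_univ _, by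
      have : h j ≠ 0 := hj
      positivity⟩
  have hne : v * (∑ j, h j ^ 2).toNNReal ≠ 0 := by
    have := Real.toNNReal_pos.mpr hpos
    exact mul_ne_zero hv this.ne'
  have := nullSingletonClass_gaussianReal (μ := 0) hne
  have h0 : ∀ᵐ r ∂(gaussianReal 0 (v * (∑ j, h j ^ 2).toNNReal)), r ≠ 0 := by
    rw [ae_iff]
    simp
  rw [← dot_law] at h0
  exact ae_of_ae_map hmeas.aemeasurable h0

/-- Symmetrization over `w ↦ -w`. The null set `⟨w, h⟩ = 0`, on which both signs would open the gate,
is ignored. -/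
theorem lintegral_symm {q : ℕ} (v : NNReal) (hv : v ≠ 0) (h : Fin q → ℝ) (hh : h ≠ 0)
    (f : (Fin q → ℝ) → ENNReal) (hf : Measurable f) (g : (Fin q → ℝ) → ENNReal)
    (hfg : ∀ w, ∑ j, w j * h j ≠ 0 → f w + f (-w) ≤ g w) :
    2 * ∫⁻ w, f w ∂(Measure.pi fun _ : Fin q => gaussianReal 0 v) ≤
      ∫⁻ w, g w ∂(Measure.pi fun _ : Fin q => gaussianReal 0 v) := by
  have h1 := (gaussVec_neg q v).lintegral_comp hf
  rw [two_mul]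
  nth_rewrite 2 [← h1]
  rw [← lintegral_add_left hf]
  refine lintegral_mono_ae ?_
  filter_upwards [dot_ne_zero_ae v hv h hh] with w hw using hfg w hw

/-! ### Moments of a single random layer -/

instance instProbGaussMat (p q : ℕ) (v : NNReal) : IsProbabilityMeasure (gaussMat p q v) := by
  unfold gaussMat
  infer_instance

theorem row_nonpos_le {q : ℕ} (v : NNReal) (hv : v ≠ 0) (h : Fin q → ℝ) (hh : h ≠ 0) :
    (Measure.pi fun _ : Fin q => gaussianReal 0 v) {w | ∑ j, w j * h j ≤ 0} ≤ 1 / 2 := by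
  have hmeas : Measurable (fun w : Fin q → ℝ => ∑ j, w j * h j) := by fun_prop
  have hS : MeasurableSet {w : Fin q → ℝ | ∑ j, w j * h j ≤ 0} :=
    measurableSet_le hmeas measurable_const
  have := lintegral_symm v hv h hh ({w : Fin q → ℝ | ∑ j, w j * h j ≤ 0}.indicator 1)
    (measurable_one.indicator hS) (fun _ => 1) (by
      intro w hw
      simp only [Set.indicator_apply, Set.mem_ofPred_eq, Pi.neg_apply, neg_mul,
        Finset.sum_neg_distrib, Pi.one_apply]
      rcases lt_or_gt_of_ne hw with h1 | h1
      · rw [if_pos h1.le, if_neg (by linarith)]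
        simp
      · rw [if_neg (by linarith), if_pos (by linarith)]
        simp)
  rw [lintegral_indicator_one hS, lintegral_const, measure_univ, one_mul] at this
  rw [ENNReal.le_div_iff_mul_le (by simp) (by simp), mul_comm]
  exact this

/-- A fixed nonzero vector is sent to zero by a random ReLU layer with `p` units only if all `p`
independent rows have nonpositive product with it. -/
theorem relu_zero_le {p q : ℕ} (v : NNReal) (hv : v ≠ 0) (h : Fin q → ℝ) (hh : h ≠ 0) :
    gaussMat p q v {w | relu (mulVec w h) = 0} ≤ (1 / 2) ^ p := by
  have hset : {w : Fin p → Fin q → ℝ | relu (mulVec w h) = 0} =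
      Set.univ.pi fun _ : Fin p => {w : Fin q → ℝ | ∑ j, w j * h j ≤ 0} := by
    ext w
    simp [relu, mulVec, funext_iff]
  rw [hset, gaussMat, Measure.pi_pi]
  refine (Finset.prod_le_prod' fun k _ => row_nonpos_le v hv h hh).trans ?_
  simp

/-- Exponential moment of one gated row: by symmetry the gate acts as an independent fair coin. -/
theorem row_exp_le {q : ℕ} (v : NNReal) (hv : v ≠ 0) (h y : Fin q → ℝ) (hh : h ≠ 0)
    (l : ℝ) (hl : 2 * l * (v * ∑ j, y j ^ 2) < 1) :
    ∫⁻ w, ENNReal.ofReal (Real.exp (l * ((if 0 ≤ ∑ j, w j * h j then 1 else 0) *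
        ∑ j, w j * y j) ^ 2)) ∂(Measure.pi fun _ : Fin q => gaussianReal 0 v) ≤
      ENNReal.ofReal (1 / 2 + 1 / 2 * (1 / Real.sqrt (1 - 2 * l * (v * ∑ j, y j ^ 2)))) := by
  have hmh : Measurable (fun w : Fin q → ℝ => ∑ j, w j * h j) := by fun_prop
  have hmy : Measurable (fun w : Fin q → ℝ => ∑ j, w j * y j) := by fun_prop
  have hnn : 0 ≤ ∑ j, y j ^ 2 := Finset.sum_nonneg fun j _ => sq_nonneg _
  have hmi : Measurable (fun w : Fin q → ℝ => if 0 ≤ ∑ j, w j * h j then (1:ℝ) else 0) :=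
    Measurable.ite (measurableSet_le measurable_const hmh) measurable_const measurable_const
  have h1 := lintegral_symm v hv h hh (fun w => ENNReal.ofReal (Real.exp (l *
      ((if 0 ≤ ∑ j, w j * h j then 1 else 0) * ∑ j, w j * y j) ^ 2)))
    (ENNReal.measurable_ofReal.comp (Real.measurable_exp.comp (((hmi.mul hmy).pow_const 2).const_mul l)))
    (fun w => 1 + ENNReal.ofReal (Real.exp (l * (∑ j, w j * y j) ^ 2))) (by
      intro w hw
      simp only [Pi.neg_apply, neg_mul, Finset.sum_neg_distrib]
      rcases lt_or_gt_of_ne hw with h1 | h1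
      · rw [if_neg (by linarith), if_pos (by linarith)]
        simp
      · rw [if_pos (by linarith), if_neg (by linarith)]
        simp [add_comm])
  rw [lintegral_add_left measurable_const, lintegral_const, measure_univ, one_mul] at h1
  have h2 : ∫⁻ w, ENNReal.ofReal (Real.exp (l * (∑ j, w j * y j) ^ 2))
      ∂(Measure.pi fun _ : Fin q => gaussianReal 0 v) =
      ENNReal.ofReal (1 / Real.sqrt (1 - 2 * l * (v * ∑ j, y j ^ 2))) := by
    have h3 := gaussian_exp_sq (v * (∑ j, y j ^ 2).toNNReal) l (by
      rwa [NNReal.coe_mul, Real.coe_toNNReal _ hnn])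
    rw [NNReal.coe_mul, Real.coe_toNNReal _ hnn] at h3
    rw [← h3, ← dot_law, lintegral_map (by fun_prop) hmy]
  rw [h2] at h1
  set r := 1 / Real.sqrt (1 - 2 * l * (v * ∑ j, y j ^ 2))
  have hr : 0 ≤ r := by positivity
  have h4 : ENNReal.ofReal (1 / 2 + 1 / 2 * r) = (1 + ENNReal.ofReal r) / 2 := by
    rw [show (1 / 2 + 1 / 2 * r) = (1 + r) / 2 by ring, ENNReal.ofReal_div_of_pos (by norm_num),
      ENNReal.ofReal_add (by norm_num) hr]
    simp
  rw [h4, ENNReal.le_div_iff_mul_le (by simp) (by simp), mul_comm]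
  exact h1

/-- With `t = p / m`, the bound on the exponential moment of one gated row in `layer_moment`. -/
theorem inv_sqrt_bound (t : ℝ) (h0 : 0 ≤ t) (h1 : t ≤ 1 / 8) :
    1 / 2 + 1 / 2 * (1 / Real.sqrt (1 - 4 * t)) ≤ Real.exp (t + 8 * t ^ 2) := by
  have hd : 0 < 1 - 4 * t := by linarith
  have h2 : 1 / Real.sqrt (1 - 4 * t) ≤ 1 + 2 * t + 16 * t ^ 2 := by
    rw [div_le_iff₀ (by positivity), ← Real.sqrt_sq (show 0 ≤ 1 + 2 * t + 16 * t ^ 2 by positivity),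
      ← Real.sqrt_mul (by positivity)]
    apply Real.le_sqrt_of_sq_le
    have : 0 ≤ t ^ 2 * (20 - 80 * t - 1024 * t ^ 3) := by
      apply mul_nonneg (sq_nonneg t)
      have : t ^ 3 ≤ (1 / 8) ^ 3 := by gcongr
      linarith
    nlinarith
  have h3 := Real.add_one_le_exp (t + 8 * t ^ 2)
  linarith

/-- `X ≤ exp (X - 1)` raised to the power `p`; it turns exponential moments into `p`-th moments. -/
theorem pow_le_exp (p : ℕ) (X : ℝ) (hX : 0 ≤ X) :
    X ^ p ≤ Real.exp (-(p : ℝ)) * Real.exp (p * X) := by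
  have h := Real.add_one_le_exp (X - 1)
  calc X ^ p ≤ (Real.exp (X - 1)) ^ p := by gcongr; linarith
    _ = _ := by rw [← Real.exp_nat_mul, ← Real.exp_add]; congr 1; ring

/-- A random layer gated by the sign pattern of `w h`, for a fixed `h ≠ 0`, increases the `p`-th
moment of the squared norm by at most a factor `exp (8 p² / m)`. -/
theorem layer_moment {m : ℕ} (hm : 0 < m) (h y : Fin m → ℝ) (hh : h ≠ 0) (p : ℕ) (hp : 1 ≤ p)
    (hpm : (p : ℝ) / m ≤ 1 / 8) :
    ∫⁻ w, ENNReal.ofReal ((∑ k, (signOf (mulVec w h) k * mulVec w y k) ^ 2) ^ p)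
        ∂(gaussMat m m (2 / m)) ≤
      ENNReal.ofReal (Real.exp (8 * p ^ 2 / m) * (∑ k, y k ^ 2) ^ p) := by
  have hm' : (0:ℝ) < m := by exact_mod_cast hm
  have hv : (2 / m : NNReal) ≠ 0 := by positivity
  by_cases hy : ∑ k, y k ^ 2 = 0
  · have hy0 : y = 0 := by
      ext k
      have := (Finset.sum_eq_zero_iff_of_nonneg (fun k _ => sq_nonneg (y k))).mp hy k
        (Finset.mem_univ k)
      simpa using this
    subst hy0
    simp [mulVec, show p ≠ 0 by omega]
  have hnn : 0 ≤ ∑ j, y j ^ 2 := Finset.sum_nonneg fun j _ => sq_nonneg _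
  set N := ∑ j, y j ^ 2 with hN
  have hNpos : 0 < N := lt_of_le_of_ne hnn (Ne.symm hy)
  -- with this rate the exponent summed over all rows is `p * (X / N)`
  set l : ℝ := p / N with hl
  have hvN : 2 * l * (((2 / m : NNReal) : ℝ) * N) = 4 * (p / m) := by
    push_cast
    rw [hl]
    field_simp
    ring
  set F : (Fin m → ℝ) → ENNReal := fun w => ENNReal.ofReal (Real.exp (l *
    ((if 0 ≤ ∑ j, w j * h j then 1 else 0) * ∑ j, w j * y j) ^ 2)) with hF
  have hmh : Measurable (fun w : Fin m → ℝ => ∑ j, w j * h j) := by fun_prop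
  have hmy : Measurable (fun w : Fin m → ℝ => ∑ j, w j * y j) := by fun_prop
  have hmi : Measurable (fun w : Fin m → ℝ => if 0 ≤ ∑ j, w j * h j then (1:ℝ) else 0) :=
    Measurable.ite (measurableSet_le measurable_const hmh) measurable_const measurable_const
  have hFm : Measurable F := ENNReal.measurable_ofReal.comp
    (Real.measurable_exp.comp (((hmi.mul hmy).pow_const 2).const_mul l))
  have hpt : ∀ w : Fin m → Fin m → ℝ,
      ENNReal.ofReal ((∑ k, (signOf (mulVec w h) k * mulVec w y k) ^ 2) ^ p) ≤
      ENNReal.ofReal (N ^ p * Real.exp (-(p : ℝ))) * ∏ k, F (w k) := by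
    intro w
    set X := ∑ k, (signOf (mulVec w h) k * mulVec w y k) ^ 2 with hX
    have hXnn : 0 ≤ X := Finset.sum_nonneg fun j _ => sq_nonneg _
    have h1 := pow_le_exp p (X / N) (by positivity)
    rw [div_pow, div_le_iff₀ (by positivity)] at h1
    have h2 : ∏ k, F (w k) = ENNReal.ofReal (Real.exp (p * (X / N))) := by
      rw [hF, ← ENNReal.ofReal_prod_of_nonneg (fun _ _ => (Real.exp_pos _).le), ← Real.exp_sum,
        ← Finset.mul_sum]
      congr 2
      rw [hl, hX]
      simp only [signOf, mulVec]
      ring_nf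
    rw [h2, ← ENNReal.ofReal_mul (by positivity)]
    apply ENNReal.ofReal_le_ofReal
    linarith
  refine (lintegral_mono hpt).trans ?_
  rw [lintegral_const_mul _ (by fun_prop), gaussMat, lintegral_pi_prod _ (fun _ => F) (fun _ => hFm)]
  have h5 := row_exp_le (2 / m) hv h y hh l (by rw [← hN, hvN]; linarith)
  rw [← hN, hvN] at h5
  have h6 := h5.trans (ENNReal.ofReal_le_ofReal (inv_sqrt_bound (p / m) (by positivity) hpm))
  refine (mul_le_mul' le_rfl (Finset.prod_le_prod' fun k _ => h6)).trans ?_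
  rw [Finset.prod_const, Finset.card_univ, Fintype.card_fin, ← ENNReal.ofReal_pow (by positivity),
    ← ENNReal.ofReal_mul (by positivity)]
  apply ENNReal.ofReal_le_ofReal
  rw [← Real.exp_nat_mul, mul_assoc, ← Real.exp_add, mul_comm]
  apply le_of_eq
  congr 2
  field_simp
  ring

/-- The even moments of a centred Gaussian, through the exponential moment of `x² / (4 V)`. -/
theorem gaussian_moment (V : NNReal) (p : ℕ) (hp : 1 ≤ p) :
    ∫⁻ x, ENNReal.ofReal ((x ^ 2) ^ p) ∂(gaussianReal 0 V) ≤
      ENNReal.ofReal (2 * (4 * V * p) ^ p * Real.exp (-(p : ℝ))) := by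
  by_cases hV : V = 0
  · subst hV
    simp [show p ≠ 0 by omega]
  have hV' : (0:ℝ) < V := by positivity
  have hp' : (0:ℝ) < p := by exact_mod_cast hp
  have hpt : ∀ x : ℝ, ENNReal.ofReal ((x ^ 2) ^ p) ≤
      ENNReal.ofReal ((4 * V * p) ^ p * Real.exp (-(p : ℝ))) *
        ENNReal.ofReal (Real.exp (1 / (4 * V) * x ^ 2)) := by
    intro x
    rw [← ENNReal.ofReal_mul (by positivity)]
    apply ENNReal.ofReal_le_ofReal
    have h1 := pow_le_exp p (x ^ 2 / (4 * V * p)) (by positivity)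
    rw [div_pow, div_le_iff₀ (by positivity)] at h1
    have h2 : (p : ℝ) * (x ^ 2 / (4 * V * p)) = 1 / (4 * V) * x ^ 2 := by field_simp
    rw [h2] at h1
    linarith
  refine (lintegral_mono hpt).trans ?_
  have h3 : 2 * (1 / (4 * V)) * (V : ℝ) = 1 / 2 := by field_simp; norm_num
  rw [lintegral_const_mul _ (by fun_prop), gaussian_exp_sq V _ (by rw [h3]; norm_num), h3,
    ← ENNReal.ofReal_mul (by positivity)]
  apply ENNReal.ofReal_le_ofReal
  have h4 : 1 / Real.sqrt (1 - 1 / 2) ≤ 2 := by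
    rw [div_le_iff₀ (by norm_num)]
    have : (1:ℝ) / 2 ≤ Real.sqrt (1 - 1 / 2) := Real.le_sqrt_of_sq_le (by norm_num)
    linarith
  have : 0 ≤ (4 * V * p) ^ p * Real.exp (-(p : ℝ)) := by positivity
  nlinarith

/-- For a Gaussian matrix `w` the bilinear form `uᵀ w y` is Gaussian with variance
`v ‖y‖² ‖u‖²`. -/
theorem bilin_law {p q : ℕ} (v : NNReal) (u : Fin p → ℝ) (y : Fin q → ℝ) :
    (gaussMat p q v).map (fun w => dot u (mulVec w y)) =
      gaussianReal 0 (v * (∑ j, y j ^ 2).toNNReal * (∑ k, u k ^ 2).toNNReal) := by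
  have hmy : Measurable (fun w : Fin q → ℝ => ∑ j, w j * y j) := by fun_prop
  have h1 := Measure.pi_map_pi (μ := fun _ : Fin p => Measure.pi fun _ : Fin q => gaussianReal 0 v)
    (f := fun (_ : Fin p) (w : Fin q → ℝ) => ∑ j, w j * y j)
    (hμ := fun _ => by rw [dot_law]; infer_instance) (fun _ => hmy.aemeasurable)
  simp only [dot_law] at h1
  rw [← dot_law, ← h1, Measure.map_map (by fun_prop) (by fun_prop)]
  unfold gaussMat
  congr 1
  ext w
  simp [dot, mulVec, mul_comm]

/-- The last matrix of the product carries no sign pattern, so conditionally on the previous ones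
the bilinear form is Gaussian. -/
theorem final_moment {m : ℕ} (u y : Fin m → ℝ) (p : ℕ) (hp : 1 ≤ p) :
    ∫⁻ w, ENNReal.ofReal (((dot u (mulVec w y)) ^ 2) ^ p) ∂(gaussMat m m (2 / m)) ≤
      ENNReal.ofReal (2 * (8 * p / m) ^ p * Real.exp (-(p : ℝ)) *
        (∑ k, u k ^ 2) ^ p * (∑ k, y k ^ 2) ^ p) := by
  have hmeas : Measurable (fun w : Fin m → Fin m → ℝ => dot u (mulVec w y)) := by
    unfold dot mulVec
    fun_prop
  have h1 := gaussian_moment ((2 / m) * (∑ j, y j ^ 2).toNNReal * (∑ k, u k ^ 2).toNNReal) p hp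
  rw [← bilin_law, lintegral_map (by fun_prop) hmeas] at h1
  refine h1.trans (ENNReal.ofReal_le_ofReal (le_of_eq ?_))
  have hnn : 0 ≤ ∑ j, y j ^ 2 := Finset.sum_nonneg fun j _ => sq_nonneg _
  have hnn' : 0 ≤ ∑ j, u j ^ 2 := Finset.sum_nonneg fun j _ => sq_nonneg _
  push_cast
  rw [Real.coe_toNNReal _ hnn, Real.coe_toNNReal _ hnn']
  rw [show (4 * (2 / (m:ℝ) * (∑ j, y j ^ 2) * ∑ k, u k ^ 2) * p) =
    (8 * p / m) * (∑ k, u k ^ 2) * ∑ j, y j ^ 2 by ring, mul_pow, mul_pow]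
  ring

/-! ### Layerwise integration of the product of layers -/

theorem mulVec_mmul {p q r : ℕ} (M : Fin p → Fin q → ℝ) (N : Fin q → Fin r → ℝ) (v : Fin r → ℝ) :
    mulVec (mmul M N) v = mulVec M (mulVec N v) := by
  ext i
  simp only [mulVec, mmul, Finset.sum_mul, Finset.mul_sum]
  rw [Finset.sum_comm]
  exact Finset.sum_congr rfl fun _ _ => Finset.sum_congr rfl fun _ _ => by ring

theorem mulVec_diagMat {p : ℕ} (D v : Fin p → ℝ) : mulVec (diagMat D) v = fun k => D k * v k := by
  ext i
  simp [mulVec, diagMat]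

theorem mulVec_idMat {p : ℕ} (v : Fin p → ℝ) : mulVec (idMat p) v = v := by
  ext i
  simp [mulVec, idMat]

theorem Wat_succ (W : Fin L → Fin m → Fin m → ℝ) (l : ℕ) (hl : l < L) :
    Wat W (l + 1) = W ⟨l, hl⟩ := by
  simp [Wat, show l + 1 ≤ L by omega]

/-- Layers up to `j` read only the matrices `W 0, …, W (j - 1)`: since `Wat W ℓ = W (ℓ - 1)`,
changing `W j` affects only `Wat W (j + 1)`. -/
theorem Wat_update (W : Fin L → Fin m → Fin m → ℝ) (j : Fin L) (w : Fin m → Fin m → ℝ) (l : ℕ)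
    (hl : l ≤ j) : Wat (Function.update W j w) l = Wat W l := by
  unfold Wat
  split_ifs with h
  · rw [Function.update_of_ne]
    intro h'
    have := congrArg Fin.val h'
    simp at this
    omega
  · rfl

theorem hseq_update (A : Fin m → Fin 𝔡 → ℝ) (W : Fin L → Fin m → Fin m → ℝ) (x : Fin 𝔡 → ℝ)
    (j : Fin L) (w : Fin m → Fin m → ℝ) (l : ℕ) (hl : l ≤ j) :
    hseq A (Function.update W j w) x l = hseq A W x l := by
  induction l with
  | zero => rfl
  | succ l ih => simp only [hseq, ih (by omega), Wat_update W j w (l + 1) hl]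

theorem gseq_update (A : Fin m → Fin 𝔡 → ℝ) (W : Fin L → Fin m → Fin m → ℝ) (x : Fin 𝔡 → ℝ)
    (j : Fin L) (w : Fin m → Fin m → ℝ) (l : ℕ) (hl : l ≤ j) :
    gseq A (Function.update W j w) x l = gseq A W x l := by
  cases l with
  | zero => rfl
  | succ l => simp only [gseq, hseq_update A W x j w l (by omega), Wat_update W j w (l + 1) hl]

theorem prodDW_succ (A : Fin m → Fin 𝔡 → ℝ) (W : Fin L → Fin m → Fin m → ℝ) (x : Fin 𝔡 → ℝ)
    (a l : ℕ) (ha : a ≤ l + 1) (hl : l < L) (v : Fin m → ℝ) :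
    mulVec (prodDW A W x a (l + 1)) v = fun k => signOf (gseq A W x (l + 1)) k *
      mulVec (Wat W (l + 1)) (mulVec (prodDW A W x a l) v) k := by
  unfold prodDW
  rw [chainProd, if_pos ⟨ha, hl⟩, mulVec_mmul, mulVec_mmul, mulVec_diagMat]

theorem prodDW_of_lt (A : Fin m → Fin 𝔡 → ℝ) (W : Fin L → Fin m → Fin m → ℝ) (x : Fin 𝔡 → ℝ)
    (a l : ℕ) (ha : l < a) : prodDW A W x a l = idMat m := by
  unfold prodDW
  induction l with
  | zero => rfl
  | succ l ih => rw [chainProd, if_neg (by omega), ih (by omega)]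

theorem prodDW_update (A : Fin m → Fin 𝔡 → ℝ) (W : Fin L → Fin m → Fin m → ℝ) (x : Fin 𝔡 → ℝ)
    (j : Fin L) (w : Fin m → Fin m → ℝ) (a l : ℕ) (hl : l ≤ j) :
    prodDW A (Function.update W j w) x a l = prodDW A W x a l := by
  unfold prodDW
  induction l with
  | zero => rfl
  | succ l ih =>
    simp only [chainProd, ih (by omega), Wat_update W j w (l + 1) hl,
      gseq_update A W x j w (l + 1) hl]

theorem relu_mulVec_zero {p q : ℕ} (M : Fin p → Fin q → ℝ) : relu (mulVec M 0) = 0 := by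
  ext k
  simp [relu, mulVec]

theorem hseq_succ (A : Fin m → Fin 𝔡 → ℝ) (W : Fin L → Fin m → Fin m → ℝ) (x : Fin 𝔡 → ℝ)
    (l : ℕ) (hl : l < L) :
    hseq A W x (l + 1) = relu (mulVec (Wat W (l + 1)) (hseq A W x l)) := by
  rw [hseq, if_pos (Nat.succ_le_of_lt hl)]

/-- A vanishing activation vector stays zero in all later layers. -/
theorem hseq_zero_mono (A : Fin m → Fin 𝔡 → ℝ) (W : Fin L → Fin m → Fin m → ℝ) (x : Fin 𝔡 → ℝ)
    (l l' : ℕ) (hl : l ≤ l') (h0 : hseq A W x l = 0) : hseq A W x l' = 0 := by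
  induction l', hl using Nat.le_induction with
  | base => exact h0
  | succ k _ ih =>
    rw [hseq]
    split_ifs
    · rw [ih, relu_mulVec_zero]
    · exact ih

theorem measurable_mulVec {α : Type*} [MeasurableSpace α] {p q : ℕ}
    {M : α → Fin p → Fin q → ℝ} {v : α → Fin q → ℝ} (hM : Measurable M) (hv : Measurable v) :
    Measurable fun z => mulVec (M z) (v z) := by
  unfold mulVec
  refine measurable_pi_lambda _ fun i => Finset.measurable_sum _ fun j _ => ?_
  exact ((measurable_pi_apply j).comp ((measurable_pi_apply i).comp hM)).mul
    ((measurable_pi_apply j).comp hv)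

theorem measurable_Wat (l : ℕ) :
    Measurable fun W : Fin L → Fin m → Fin m → ℝ => Wat W l := by
  unfold Wat
  split_ifs
  · exact measurable_pi_apply _
  · exact measurable_const

theorem measurable_relu {p : ℕ} : Measurable (relu (p := p)) := by
  unfold relu
  fun_prop

theorem measurable_signOf {p : ℕ} : Measurable (signOf (p := p)) := by
  unfold signOf
  refine measurable_pi_lambda _ fun k => ?_
  exact Measurable.ite (measurableSet_le measurable_const (measurable_pi_apply k))
    measurable_const measurable_const

theorem measurable_hseq (x : Fin 𝔡 → ℝ) (l : ℕ) :
    Measurable fun z : (Fin m → Fin 𝔡 → ℝ) × (Fin L → Fin m → Fin m → ℝ) =>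
      hseq z.1 z.2 x l := by
  induction l with
  | zero => exact measurable_relu.comp (measurable_mulVec measurable_fst measurable_const)
  | succ l ih =>
    simp only [hseq]
    split_ifs
    · exact measurable_relu.comp (measurable_mulVec ((measurable_Wat _).comp measurable_snd) ih)
    · exact ih

theorem measurable_gseq (x : Fin 𝔡 → ℝ) (l : ℕ) :
    Measurable fun z : (Fin m → Fin 𝔡 → ℝ) × (Fin L → Fin m → Fin m → ℝ) =>
      gseq z.1 z.2 x l := by
  cases l with
  | zero => exact measurable_mulVec measurable_fst measurable_const
  | succ l => exact measurable_mulVec ((measurable_Wat _).comp measurable_snd) (measurable_hseq x l)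

theorem measurable_prodDW (x : Fin 𝔡 → ℝ) (a l : ℕ) (v : Fin m → ℝ) :
    Measurable fun z : (Fin m → Fin 𝔡 → ℝ) × (Fin L → Fin m → Fin m → ℝ) =>
      mulVec (prodDW z.1 z.2 x a l) v := by
  induction l with
  | zero => exact (measurable_const (a := mulVec (idMat m) v))
  | succ l ih =>
    by_cases h : a ≤ l + 1 ∧ l + 1 ≤ L
    · simp only [prodDW_succ _ _ x a l h.1 h.2]
      refine measurable_pi_lambda _ fun k => Measurable.mul ?_ ?_
      · exact (measurable_pi_apply k).comp (measurable_signOf.comp (measurable_gseq x (l + 1)))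
      · exact (measurable_pi_apply k).comp
          (measurable_mulVec ((measurable_Wat _).comp measurable_snd) ih)
    · have : ∀ z : (Fin m → Fin 𝔡 → ℝ) × (Fin L → Fin m → Fin m → ℝ),
          prodDW z.1 z.2 x a (l + 1) = prodDW z.1 z.2 x a l := by
        intro z
        unfold prodDW
        rw [chainProd, if_neg h]
      simp only [this]
      exact ih

/-- The law of the weight tuple `(W_1, …, W_L)` alone, used with `A` held fixed. -/
abbrev lawW (m L : ℕ) : Measure (Fin L → Fin m → Fin m → ℝ) :=
  Measure.pi fun _ : Fin L => gaussMat m m (2 / m)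

theorem measurableSet_hseq_zero (x : Fin 𝔡 → ℝ) (l : ℕ) :
    MeasurableSet {z : (Fin m → Fin 𝔡 → ℝ) × (Fin L → Fin m → Fin m → ℝ) |
      hseq z.1 z.2 x l = 0} :=
  measurable_hseq x l (measurableSet_singleton 0)

theorem measurable_pair (A : Fin m → Fin 𝔡 → ℝ) :
    Measurable fun W : Fin L → Fin m → Fin m → ℝ => (A, W) := measurable_prodMk_left

theorem measurable_gate (x : Fin 𝔡 → ℝ) (l : ℕ)
    {F : (Fin m → Fin 𝔡 → ℝ) × (Fin L → Fin m → Fin m → ℝ) → ℝ} (hF : Measurable F) :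
    Measurable fun z => if hseq z.1 z.2 x l = 0 then 0 else ENNReal.ofReal (F z) :=
  Measurable.ite (measurableSet_hseq_zero x l) measurable_const (ENNReal.measurable_ofReal.comp hF)

theorem measurable_sumsq {α : Type*} [MeasurableSpace α] {q : ℕ} {v : α → Fin q → ℝ}
    (hv : Measurable v) (p : ℕ) : Measurable fun z => (∑ k, v z k ^ 2) ^ p :=
  (Finset.measurable_sum _ fun k _ =>
    ((measurable_pi_apply k).comp hv).pow_const 2).pow_const p

/-- The `p`-th moment of `‖D W_{a+k} ⋯ D W_{a+1} v‖²` grows by a factor `exp (8 p² / m)` per layer.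
The indicator of nonvanishing activations is needed because `layer_moment` fails for `h = 0`, where
every gate is open; it can be moved from layer `l + 1` to layer `l` by `hseq_zero_mono`. -/
theorem chain_moment (hm : 0 < m) (A : Fin m → Fin 𝔡 → ℝ) (x : Fin 𝔡 → ℝ) (v : Fin m → ℝ)
    (p : ℕ) (hp : 1 ≤ p) (hpm : (p : ℝ) / m ≤ 1 / 8) (a k : ℕ) (hk : a + k ≤ L) :
    ∫⁻ W, (if hseq A W x (a + k) = 0 then 0 else
        ENNReal.ofReal ((∑ i, mulVec (prodDW A W x (a + 1) (a + k)) v i ^ 2) ^ p)) ∂(lawW m L) ≤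
      ENNReal.ofReal (Real.exp (8 * p ^ 2 / m) ^ k * (∑ i, v i ^ 2) ^ p) := by
  induction k with
  | zero =>
    calc _ ≤ ∫⁻ _, ENNReal.ofReal (Real.exp (8 * p ^ 2 / m) ^ 0 * (∑ i, v i ^ 2) ^ p)
          ∂(lawW m L) := by
          refine lintegral_mono fun W => ?_
          rw [prodDW_of_lt _ _ _ _ _ (by omega), mulVec_idMat]
          split_ifs
          · exact zero_le
          · simp
      _ = _ := by simp
  | succ k ih =>
    have ih := ih (by omega)
    set l := a + k with hl
    have hlL : l < L := by omega
    rw [show a + (k + 1) = l + 1 by omega]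
    set r := Real.exp (8 * p ^ 2 / m) with hr
    set Y : (Fin L → Fin m → Fin m → ℝ) → Fin m → ℝ := fun W => mulVec (prodDW A W x (a + 1) l) v
      with hY
    set f : (Fin L → Fin m → Fin m → ℝ) → ENNReal := fun W => if hseq A W x l = 0 then 0 else
      ENNReal.ofReal ((∑ i, mulVec (prodDW A W x (a + 1) (l + 1)) v i ^ 2) ^ p) with hf
    set G : (Fin L → Fin m → Fin m → ℝ) → ENNReal := fun W => if hseq A W x l = 0 then 0 else
      ENNReal.ofReal ((∑ i, Y W i ^ 2) ^ p) with hG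
    have hGm : Measurable G := (measurable_gate x l
      (measurable_sumsq (measurable_prodDW x (a + 1) l v) p)).comp (measurable_pair A)
    have hfm : Measurable f := (measurable_gate x l
      (measurable_sumsq (measurable_prodDW x (a + 1) (l + 1) v) p)).comp (measurable_pair A)
    have h1 : ∫⁻ W, f W ∂(lawW m L) ≤ ∫⁻ W, ENNReal.ofReal r * G W ∂(lawW m L) := by
      refine lintegral_pi_step _ ⟨l, hlL⟩ f _ hfm (hGm.const_mul _) ?_ ?_
      · intro W w
        simp only [hG, hY]
        rw [hseq_update _ _ _ _ _ _ le_rfl, prodDW_update _ _ _ _ _ _ _ le_rfl]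
      · intro W
        simp only [hf, hG]
        simp only [hseq_update A W x ⟨l, hlL⟩ _ l le_rfl]
        by_cases h0 : hseq A W x l = 0
        · simp [h0]
        · simp only [if_neg h0]
          rw [← ENNReal.ofReal_mul (Real.exp_pos _).le]
          refine le_trans (le_of_eq ?_) (layer_moment hm (hseq A W x l) (Y W) h0 p hp hpm)
          refine lintegral_congr fun w => ?_
          rw [prodDW_succ _ _ _ _ _ (by omega) hlL, prodDW_update _ _ _ _ _ _ _ le_rfl, gseq,
            hseq_update _ _ _ _ _ _ le_rfl, Wat_succ _ _ hlL, Function.update_self]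
    calc _ ≤ ∫⁻ W, f W ∂(lawW m L) := by
          refine lintegral_mono fun W => ?_
          simp only [hf]
          by_cases h0 : hseq A W x l = 0
          · rw [if_pos (hseq_zero_mono A W x l (l + 1) (by omega) h0)]
            exact zero_le
          · rw [if_neg h0]
            split_ifs
            · exact zero_le
            · exact le_rfl
      _ ≤ _ := h1
      _ = ENNReal.ofReal r * ∫⁻ W, G W ∂(lawW m L) := lintegral_const_mul _ hGm
      _ ≤ ENNReal.ofReal r * ENNReal.ofReal (r ^ k * (∑ i, v i ^ 2) ^ p) := by gcongr
      _ = _ := by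
          rw [← ENNReal.ofReal_mul (Real.exp_pos _).le]
          congr 1
          ring

/-- Moment bound for the bilinear form `uᵀ W_{a+k+1} D_{a+k} ⋯ W_{a+1} v`, with `A` fixed. -/
theorem bilin_moment (hm : 0 < m) (A : Fin m → Fin 𝔡 → ℝ) (x : Fin 𝔡 → ℝ) (u v : Fin m → ℝ)
    (p : ℕ) (hp : 1 ≤ p) (hpm : (p : ℝ) / m ≤ 1 / 8) (a k : ℕ) (hk : a + k < L) :
    ∫⁻ W, (if hseq A W x (a + k) = 0 then 0 else
        ENNReal.ofReal (((dot u (mulVec (mmul (Wat W (a + k + 1))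
          (prodDW A W x (a + 1) (a + k))) v)) ^ 2) ^ p)) ∂(lawW m L) ≤
      ENNReal.ofReal (2 * (8 * p / m) ^ p * Real.exp (-(p : ℝ)) *
        (∑ k, u k ^ 2) ^ p * (Real.exp (8 * p ^ 2 / m) ^ k * (∑ i, v i ^ 2) ^ p)) := by
  set l := a + k with hl
  set K : ℝ := 2 * (8 * p / m) ^ p * Real.exp (-(p : ℝ)) * (∑ k, u k ^ 2) ^ p with hK
  have hK0 : 0 ≤ K := by
    have : 0 ≤ ∑ k, u k ^ 2 := Finset.sum_nonneg fun j _ => sq_nonneg _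
    positivity
  set Y : (Fin L → Fin m → Fin m → ℝ) → Fin m → ℝ := fun W => mulVec (prodDW A W x (a + 1) l) v
    with hY
  set f : (Fin L → Fin m → Fin m → ℝ) → ENNReal := fun W => if hseq A W x l = 0 then 0 else
    ENNReal.ofReal (((dot u (mulVec (mmul (Wat W (l + 1))
          (prodDW A W x (a + 1) l)) v)) ^ 2) ^ p) with hf
  set G : (Fin L → Fin m → Fin m → ℝ) → ENNReal := fun W => if hseq A W x l = 0 then 0 else
    ENNReal.ofReal ((∑ i, Y W i ^ 2) ^ p) with hG
  have hGm : Measurable G := (measurable_gate x l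
    (measurable_sumsq (measurable_prodDW x (a + 1) l v) p)).comp (measurable_pair A)
  have hfm : Measurable f := by
    refine (measurable_gate x l (F := fun z => ((dot u (mulVec (mmul (Wat z.2 (l + 1))
          (prodDW z.1 z.2 x (a + 1) l)) v)) ^ 2) ^ p) ?_).comp (measurable_pair A)
    simp only [mulVec_mmul]
    have := measurable_mulVec ((measurable_Wat (L := L) (m := m) (l + 1)).comp measurable_snd)
      (measurable_prodDW (𝔡 := 𝔡) x (a + 1) l v)
    refine Measurable.pow_const (Measurable.pow_const ?_ 2) p
    unfold dot
    exact Finset.measurable_sum _ fun k _ => ((measurable_pi_apply k).comp this).const_mul _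
  have h1 : ∫⁻ W, f W ∂(lawW m L) ≤ ∫⁻ W, ENNReal.ofReal K * G W ∂(lawW m L) := by
    refine lintegral_pi_step _ ⟨l, hk⟩ f _ hfm (hGm.const_mul _) ?_ ?_
    · intro W w
      simp only [hG, hY]
      rw [hseq_update _ _ _ _ _ _ le_rfl, prodDW_update _ _ _ _ _ _ _ le_rfl]
    · intro W
      simp only [hf, hG]
      simp only [hseq_update A W x ⟨l, hk⟩ _ l le_rfl]
      by_cases h0 : hseq A W x l = 0
      · simp [h0]
      · simp only [if_neg h0]
        rw [← ENNReal.ofReal_mul hK0]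
        refine le_trans (le_of_eq ?_) (final_moment u (Y W) p hp)
        refine lintegral_congr fun w => ?_
        rw [mulVec_mmul, prodDW_update _ _ _ _ _ _ _ le_rfl, Wat_succ _ _ hk,
          Function.update_self]
  calc _ ≤ _ := h1
    _ = ENNReal.ofReal K * ∫⁻ W, G W ∂(lawW m L) := lintegral_const_mul _ hGm
    _ ≤ ENNReal.ofReal K * ENNReal.ofReal (Real.exp (8 * p ^ 2 / m) ^ k * (∑ i, v i ^ 2) ^ p) := by
        gcongr
        exact chain_moment hm A x v p hp hpm a k (by omega)
    _ = _ := by rw [← ENNReal.ofReal_mul hK0]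

instance instProbInitAW (𝔡 m L : ℕ) : IsProbabilityMeasure (initAW 𝔡 m L) := by
  unfold initAW
  infer_instance

/-- Each layer adds at most `2⁻ᵐ` to the probability that the activations have vanished. -/
theorem zero_W (hm : 0 < m) (A : Fin m → Fin 𝔡 → ℝ) (x : Fin 𝔡 → ℝ) (l : ℕ) (hl : l ≤ L) :
    ∫⁻ W, (if hseq A W x l = 0 then 1 else 0) ∂(lawW m L) ≤
      (if relu (mulVec A x) = 0 then 1 else 0) + l * (1 / 2 : ENNReal) ^ m := by
  induction l with
  | zero =>
    by_cases h : relu (mulVec A x) = 0 <;> simp [hseq, h]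
  | succ l ih =>
    have ih := ih (by omega)
    have hlL : l < L := by omega
    have hmeas : ∀ l, Measurable fun W : Fin L → Fin m → Fin m → ℝ =>
        if hseq A W x l = 0 then (1 : ENNReal) else 0 := fun l =>
      Measurable.ite (measurable_pair A (measurableSet_hseq_zero x l)) measurable_const
        measurable_const
    have h1 : ∫⁻ W, (if hseq A W x (l + 1) = 0 then 1 else 0) ∂(lawW m L) ≤
        ∫⁻ W, ((if hseq A W x l = 0 then 1 else 0) + (1 / 2 : ENNReal) ^ m) ∂(lawW m L) := by
      refine lintegral_pi_step _ ⟨l, hlL⟩ _ _ (hmeas (l + 1)) ((hmeas l).add_const _) ?_ ?_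
      · intro W w
        rw [hseq_update _ _ _ _ _ _ le_rfl]
      · intro W
        by_cases h0 : hseq A W x l = 0
        · rw [if_pos h0]
          calc _ ≤ ∫⁻ _, (1 : ENNReal) ∂(gaussMat m m (2 / m)) :=
                lintegral_mono fun w => by split_ifs <;> simp
            _ = 1 := by simp
            _ ≤ _ := le_self_add
        · rw [if_neg h0, zero_add]
          refine le_trans (le_of_eq ?_) (relu_zero_le (2 / m) (by positivity) (hseq A W x l) h0)
          have hS : MeasurableSet {w : Fin m → Fin m → ℝ |
              relu (mulVec w (hseq A W x l)) = 0} :=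
            measurable_relu.comp (measurable_mulVec measurable_id measurable_const)
              (measurableSet_singleton 0)
          rw [← lintegral_indicator_one hS]
          refine lintegral_congr fun w => ?_
          rw [hseq_succ _ _ _ _ hlL, hseq_update _ _ _ _ _ _ le_rfl, Wat_succ _ _ hlL,
            Function.update_self]
          simp [Set.indicator_apply]
    refine h1.trans ?_
    rw [lintegral_add_right _ measurable_const, lintegral_const, measure_univ, mul_one]
    refine (add_le_add_left ih _).trans (le_of_eq ?_)
    push_cast
    ring

theorem zero_prob (hm : 0 < m) (x : Fin 𝔡 → ℝ) (hx : x ≠ 0) :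
    initAW 𝔡 m L {z | hseq z.1 z.2 x L = 0} ≤ (L + 1) * (1 / 2 : ENNReal) ^ m := by
  have hS := measurableSet_hseq_zero (m := m) (L := L) x L
  rw [← lintegral_indicator_one hS, initAW, lintegral_prod _ (measurable_one.indicator hS).aemeasurable]
  have hA : MeasurableSet {A : Fin m → Fin 𝔡 → ℝ | relu (mulVec A x) = 0} :=
    measurable_relu.comp (measurable_mulVec measurable_id measurable_const)
      (measurableSet_singleton 0)
  calc _ ≤ ∫⁻ A, ((if relu (mulVec A x) = 0 then 1 else 0) + L * (1 / 2 : ENNReal) ^ m)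
        ∂(gaussMat m 𝔡 (2 / m)) := lintegral_mono fun A => by
          refine le_trans (le_of_eq ?_) (zero_W hm A x L le_rfl)
          simp [Set.indicator_apply]
    _ = gaussMat m 𝔡 (2 / m) {A | relu (mulVec A x) = 0} + L * (1 / 2 : ENNReal) ^ m := by
        rw [lintegral_add_right _ measurable_const, lintegral_const, measure_univ, mul_one,
          ← lintegral_indicator_one hA]
        simp [Set.indicator_apply]
    _ ≤ (1 / 2) ^ m + L * (1 / 2 : ENNReal) ^ m := by
        gcongr
        exact relu_zero_le (2 / m) (by positivity) x hx
    _ = _ := by ring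

/-! ### A grid net for sparse vectors, and the tail of the bilinear form -/

/-- The multiple `(c - m) / m` of `1 / m` in `[-1, 1]`, indexed by `c ∈ {0, …, 2m}`. -/
def gridVal (m : ℕ) (c : Fin (2 * m + 1)) : ℝ := ((c : ℕ) - (m : ℝ)) / m

/-- The vector with `s` prescribed (position, grid value) pairs; values at a repeated position are
added, so an `s`-tuple of pairs encodes at least all `s`-sparse vectors with grid entries. -/
def gridVec (m s : ℕ) (q : Fin s → Fin m × Fin (2 * m + 1)) : Fin m → ℝ :=
  fun k => ∑ j, if (q j).1 = k then gridVal m (q j).2 else 0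

/-- Rounding towards zero to a multiple of `1 / m`. -/
theorem exists_gridVal (hm : 0 < m) (r : ℝ) (hr : |r| ≤ 1) :
    ∃ c, |gridVal m c| ≤ |r| ∧ |r - gridVal m c| ≤ 1 / m := by
  have hm' : (0:ℝ) < m := by exact_mod_cast hm
  set f : ℕ := ⌊|r| * m⌋₊ with hf
  have h1 : (f : ℝ) ≤ |r| * m := Nat.floor_le (by positivity)
  have h2 : |r| * m < f + 1 := Nat.lt_floor_add_one _
  have hfm : f ≤ m := by
    have : (f : ℝ) ≤ m := h1.trans (by nlinarith)
    exact_mod_cast this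
  have h3 : (f : ℝ) / m ≤ |r| := by rwa [div_le_iff₀ hm']
  have h4 : |r| - (f : ℝ) / m ≤ 1 / m := by
    rw [sub_le_iff_le_add, ← add_div, le_div_iff₀ hm']
    linarith
  have hf0 : (0:ℝ) ≤ (f : ℝ) / m := by positivity
  rcases le_or_gt 0 r with h0 | h0
  · refine ⟨⟨m + f, by omega⟩, ?_⟩
    have : gridVal m ⟨m + f, by omega⟩ = f / m := by
      simp [gridVal]
    rw [this]
    rw [abs_of_nonneg h0] at *
    rw [abs_of_nonneg hf0, abs_of_nonneg (by linarith)]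
    exact ⟨h3, h4⟩
  · refine ⟨⟨m - f, by omega⟩, ?_⟩
    have : gridVal m ⟨m - f, by omega⟩ = -(f / m) := by
      simp only [gridVal]
      rw [Nat.cast_sub hfm]
      ring
    rw [this]
    rw [abs_of_neg h0] at *
    rw [abs_neg, abs_of_nonneg hf0, abs_le]
    exact ⟨h3, by linarith, by linarith [show (0:ℝ) ≤ 1 / m by positivity]⟩

/-- Coordinatewise rounding towards zero of an `s`-sparse vector is a grid vector. The rounding
never increases absolute values, so both support and unit ball are preserved. -/
theorem exists_gridVec (hm : 0 < m) (s : ℕ) (u : Fin m → ℝ) (hs : l0 u ≤ s)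
    (hu : ∀ k, |u k| ≤ 1) :
    ∃ q, ∀ k, |gridVec m s q k| ≤ |u k| ∧ |u k - gridVec m s q k| ≤ 1 / m := by
  induction s generalizing u with
  | zero =>
    refine ⟨fun j => j.elim0, fun k => ?_⟩
    have h0 : u k = 0 := by
      by_contra h
      have : k ∈ Finset.univ.filter fun k => u k ≠ 0 := by simpa using h
      have := Finset.card_pos.mpr ⟨k, this⟩
      unfold l0 at hs
      omega
    simp [gridVec, h0]
  | succ s ih =>
    obtain ⟨k, hk⟩ : ∃ k, l0 (Function.update u k 0) ≤ s := by
      by_cases h : ∃ k, u k ≠ 0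
      · obtain ⟨k, hk⟩ := h
        refine ⟨k, ?_⟩
        have hlt : l0 (Function.update u k 0) < l0 u := by
          apply Finset.card_lt_card
          refine Finset.ssubset_iff_of_subset ?_ |>.mpr ⟨k, by simpa using hk, by simp⟩
          intro i hi
          simp only [Finset.mem_filter, Finset.mem_univ, true_and] at hi ⊢
          intro h0
          by_cases hik : i = k
          · subst hik
            simp at hi
          · rw [Function.update_of_ne hik] at hi
            exact hi h0
        omega
      · push Not at h
        refine ⟨⟨0, hm⟩, ?_⟩
        have : Function.update u ⟨0, hm⟩ 0 = 0 := by
          ext i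
          by_cases hi : i = ⟨0, hm⟩
          · subst hi
            simp
          · rw [Function.update_of_ne hi, h i, Pi.zero_apply]
        rw [this]
        simp [l0]
    obtain ⟨q, hq⟩ := ih (Function.update u k 0) hk (fun i => by
      by_cases hi : i = k
      · subst hi
        simp
      · rw [Function.update_of_ne hi]
        exact hu i)
    obtain ⟨c, hc⟩ := exists_gridVal hm (u k) (hu k)
    refine ⟨Fin.cons (k, c) q, fun i => ?_⟩
    have hi' : gridVec m (s + 1) (Fin.cons (k, c) q) i =
        (if k = i then gridVal m c else 0) + gridVec m s q i := by
      simp [gridVec, Fin.sum_univ_succ]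
    rw [hi']
    by_cases hi : i = k
    · subst hi
      have h0 := (hq i).1
      simp only [Function.update_self, abs_zero, abs_nonpos_iff] at h0
      simpa [h0] using hc
    · have := hq i
      rw [Function.update_of_ne hi] at this
      simpa [Ne.symm hi] using this

/-- The rounding error has norm at most `1 / 4`. -/
theorem sumsq_sub_le (hm : 0 < m) (s : ℕ) (hs : 16 * (s : ℝ) ≤ (m : ℝ) ^ 2) (u g : Fin m → ℝ)
    (hu : l0 u ≤ s) (hg : ∀ k, |g k| ≤ |u k| ∧ |u k - g k| ≤ 1 / m) :
    ∑ k, (4 * (u k - g k)) ^ 2 ≤ 1 := by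
  have hm' : (0:ℝ) < m := by exact_mod_cast hm
  have h1 : ∀ k, (4 * (u k - g k)) ^ 2 ≤ if u k ≠ 0 then 16 / (m : ℝ) ^ 2 else 0 := by
    intro k
    split_ifs with h
    · have h2 : (u k - g k) ^ 2 ≤ (1 / (m : ℝ)) ^ 2 :=
        sq_le_sq' (abs_le.mp (hg k).2).1 (abs_le.mp (hg k).2).2
      calc (4 * (u k - g k)) ^ 2 = 16 * (u k - g k) ^ 2 := by ring
        _ ≤ 16 * (1 / (m : ℝ)) ^ 2 := by gcongr
        _ = _ := by ring
    · have h0 : u k = 0 := by simpa using h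
      have h3 := (hg k).1
      rw [h0, abs_zero, abs_nonpos_iff] at h3
      simp [h0, h3]
  refine (Finset.sum_le_sum fun k _ => h1 k).trans ?_
  rw [← Finset.sum_filter, Finset.sum_const, nsmul_eq_mul]
  have h2 : ((Finset.univ.filter fun k => u k ≠ 0).card : ℝ) ≤ s := by exact_mod_cast hu
  calc _ ≤ (s : ℝ) * (16 / (m : ℝ) ^ 2) := by gcongr
    _ ≤ 1 := by
      rw [← mul_div_assoc, div_le_one (by positivity)]
      linarith

theorem l0_mono {u g : Fin m → ℝ} (h : ∀ k, u k = 0 → g k = 0) : l0 g ≤ l0 u := by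
  apply Finset.card_le_card
  intro k hk
  simp only [Finset.mem_filter, Finset.mem_univ, true_and] at hk ⊢
  exact fun h0 => hk (h k h0)

theorem dot_mulVec_eq (M : Fin m → Fin m → ℝ) (u v : Fin m → ℝ) :
    dot u (mulVec M v) = ∑ i, ∑ j, u i * M i j * v j := by
  simp only [dot, mulVec, Finset.mul_sum, mul_assoc]

theorem abs_le_one_of_sumsq {u : Fin m → ℝ} (h : ∑ k, u k ^ 2 ≤ 1) (k : Fin m) : |u k| ≤ 1 := by
  have h1 : u k ^ 2 ≤ ∑ k, u k ^ 2 :=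
    Finset.single_le_sum (f := fun k => u k ^ 2) (fun _ _ => sq_nonneg _) (Finset.mem_univ k)
  rw [← sq_le_one_iff_abs_le_one]
  linarith

/-- The net argument on the unit ball: the supremum over sparse vectors is bounded by the grid bound
plus half of itself, since the rounding errors are again sparse, with norm at most `1 / 4`. -/
theorem net_bound_ball (hm : 0 < m) (s : ℕ) (hs : 16 * (s : ℝ) ≤ (m : ℝ) ^ 2)
    (M : Fin m → Fin m → ℝ) (B : ℝ)
    (hB : ∀ q q', ∑ k, gridVec m s q k ^ 2 ≤ 1 → ∑ k, gridVec m s q' k ^ 2 ≤ 1 →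
      |dot (gridVec m s q) (mulVec M (gridVec m s q'))| ≤ B)
    (u v : Fin m → ℝ) (hu : l0 u ≤ s) (hv : l0 v ≤ s) (hu1 : ∑ k, u k ^ 2 ≤ 1)
    (hv1 : ∑ k, v k ^ 2 ≤ 1) : |dot u (mulVec M v)| ≤ 2 * B := by
  set S : Set ℝ := {r | ∃ u v : Fin m → ℝ, l0 u ≤ s ∧ l0 v ≤ s ∧ ∑ k, u k ^ 2 ≤ 1 ∧
    ∑ k, v k ^ 2 ≤ 1 ∧ r = |dot u (mulVec M v)|} with hS
  have hbdd : BddAbove S := by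
    refine ⟨∑ i, ∑ j, |M i j|, ?_⟩
    rintro r ⟨u, v, -, -, hu1, hv1, rfl⟩
    rw [dot_mulVec_eq]
    refine (Finset.abs_sum_le_sum_abs _ _).trans (Finset.sum_le_sum fun i _ => ?_)
    refine (Finset.abs_sum_le_sum_abs _ _).trans (Finset.sum_le_sum fun j _ => ?_)
    rw [abs_mul, abs_mul]
    have h1 := abs_le_one_of_sumsq hu1 i
    have h2 := abs_le_one_of_sumsq hv1 j
    calc |u i| * |M i j| * |v j| ≤ 1 * |M i j| * 1 := by gcongr
      _ = _ := by ring
  have hK : ∀ u v : Fin m → ℝ, l0 u ≤ s → l0 v ≤ s → ∑ k, u k ^ 2 ≤ 1 → ∑ k, v k ^ 2 ≤ 1 →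
      |dot u (mulVec M v)| ≤ sSup S := fun u v h1 h2 h3 h4 =>
    le_csSup hbdd ⟨u, v, h1, h2, h3, h4, rfl⟩
  have hmain : sSup S ≤ B + sSup S / 2 := by
    refine csSup_le ⟨_, u, v, hu, hv, hu1, hv1, rfl⟩ ?_
    rintro r ⟨u, v, hu, hv, hu1, hv1, rfl⟩
    obtain ⟨q, hq⟩ := exists_gridVec hm s u hu (abs_le_one_of_sumsq hu1)
    obtain ⟨q', hq'⟩ := exists_gridVec hm s v hv (abs_le_one_of_sumsq hv1)
    set g := gridVec m s q with hg
    set g' := gridVec m s q' with hg'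
    have hsq : ∑ k, g k ^ 2 ≤ 1 := (Finset.sum_le_sum fun k _ => sq_le_sq.mpr (hq k).1).trans hu1
    have hsq' : ∑ k, g' k ^ 2 ≤ 1 :=
      (Finset.sum_le_sum fun k _ => sq_le_sq.mpr (hq' k).1).trans hv1
    have hg0 : ∀ k, u k = 0 → g k = 0 := fun k h0 => by
      have := (hq k).1
      rwa [h0, abs_zero, abs_nonpos_iff] at this
    have hg0' : ∀ k, v k = 0 → g' k = 0 := fun k h0 => by
      have := (hq' k).1
      rwa [h0, abs_zero, abs_nonpos_iff] at this
    have e1 := hB q q' hsq hsq'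
    have e2 := hK g (fun k => 4 * (v k - g' k)) ((l0_mono hg0).trans hu)
      ((l0_mono fun k h0 => by simp [h0, hg0' k h0]).trans hv) hsq (sumsq_sub_le hm s hs v g' hv hq')
    have e3 := hK (fun k => 4 * (u k - g k)) v
      ((l0_mono fun k h0 => by simp [h0, hg0 k h0]).trans hu) hv (sumsq_sub_le hm s hs u g hu hq) hv1
    have hdec : dot u (mulVec M v) = dot g (mulVec M g') +
        1 / 4 * dot g (mulVec M fun k => 4 * (v k - g' k)) +
        1 / 4 * dot (fun k => 4 * (u k - g k)) (mulVec M v) := by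
      simp only [dot_mulVec_eq, Finset.mul_sum, ← Finset.sum_add_distrib]
      exact Finset.sum_congr rfl fun _ _ => Finset.sum_congr rfl fun _ _ => by ring
    rw [hdec]
    refine (abs_add_three _ _ _).trans ?_
    rw [abs_mul, abs_mul, abs_of_pos (show (0:ℝ) < 1 / 4 by norm_num)]
    linarith
  have := hK u v hu hv hu1 hv1
  linarith

/-- By homogeneity, control of a bilinear form on grid vectors of the unit ball gives control on
all `s`-sparse vectors. -/
theorem net_bound (hm : 0 < m) (s : ℕ) (hs : 16 * (s : ℝ) ≤ (m : ℝ) ^ 2)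
    (M : Fin m → Fin m → ℝ) (B : ℝ)
    (hB : ∀ q q', ∑ k, gridVec m s q k ^ 2 ≤ 1 → ∑ k, gridVec m s q' k ^ 2 ≤ 1 →
      |dot (gridVec m s q) (mulVec M (gridVec m s q'))| ≤ B)
    (u v : Fin m → ℝ) (hu : l0 u ≤ s) (hv : l0 v ≤ s) :
    |dot u (mulVec M v)| ≤ 2 * B * l2 u * l2 v := by
  have hz : ∀ u : Fin m → ℝ, l2 u = 0 → u = 0 := by
    intro u hu
    have hnn : 0 ≤ ∑ j, u j ^ 2 := Finset.sum_nonneg fun j _ => sq_nonneg _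
    rw [l2, Real.sqrt_eq_zero hnn] at hu
    ext k
    have := (Finset.sum_eq_zero_iff_of_nonneg (fun k _ => sq_nonneg (u k))).mp hu k
      (Finset.mem_univ k)
    simpa using this
  by_cases hu0 : l2 u = 0
  · rw [hu0, hz u hu0]; simp [dot]
  by_cases hv0 : l2 v = 0
  · rw [hv0, hz v hv0]; simp [dot, mulVec]
  have hn : ∀ u : Fin m → ℝ, l2 u ≠ 0 → ∑ k, ((l2 u)⁻¹ * u k) ^ 2 ≤ 1 := by
    intro u hu
    have hnn : 0 ≤ ∑ j, u j ^ 2 := Finset.sum_nonneg fun j _ => sq_nonneg _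
    have h2 : l2 u ^ 2 = ∑ j, u j ^ 2 := Real.sq_sqrt hnn
    simp only [mul_pow, ← Finset.mul_sum]
    rw [← h2, inv_pow, inv_mul_cancel₀ (pow_ne_zero 2 hu)]
  have h := net_bound_ball hm s hs M B hB (fun k => (l2 u)⁻¹ * u k) (fun k => (l2 v)⁻¹ * v k)
    ((l0_mono fun k h0 => by simp [h0]).trans hu) ((l0_mono fun k h0 => by simp [h0]).trans hv)
    (hn u hu0) (hn v hv0)
  have hpu : 0 < l2 u := lt_of_le_of_ne (Real.sqrt_nonneg _) (Ne.symm hu0)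
  have hpv : 0 < l2 v := lt_of_le_of_ne (Real.sqrt_nonneg _) (Ne.symm hv0)
  have hdec : dot u (mulVec M v) = (l2 u * l2 v) *
      dot (fun k => (l2 u)⁻¹ * u k) (mulVec M fun k => (l2 v)⁻¹ * v k) := by
    simp only [dot_mulVec_eq, Finset.mul_sum]
    refine Finset.sum_congr rfl fun _ _ => Finset.sum_congr rfl fun _ _ => ?_
    field_simp
  rw [hdec, abs_mul, abs_of_pos (by positivity)]
  calc _ ≤ l2 u * l2 v * (2 * B) := by gcongr
    _ = _ := by ring

/-- Markov's inequality for `bilin_moment`, on the event that the activations do not vanish. -/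
theorem tail_bound (hm : 0 < m) (x : Fin 𝔡 → ℝ) (u v : Fin m → ℝ)
    (hu : ∑ k, u k ^ 2 ≤ 1) (hv : ∑ k, v k ^ 2 ≤ 1)
    (p : ℕ) (hp : 1 ≤ p) (hpm : (p : ℝ) / m ≤ 1 / 8) (a k : ℕ) (hk : a + k < L)
    (t : ℝ) (ht : 0 < t) :
    initAW 𝔡 m L {z | hseq z.1 z.2 x (a + k) ≠ 0 ∧ t ≤ (dot u (mulVec (mmul (Wat z.2 (a + k + 1))
          (prodDW z.1 z.2 x (a + 1) (a + k))) v)) ^ 2} ≤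
      ENNReal.ofReal (2 * (8 * p / (m * t)) ^ p * Real.exp (-(p : ℝ)) *
        Real.exp (8 * p ^ 2 / m) ^ k) := by
  have hm' : (0:ℝ) < m := by exact_mod_cast hm
  set R := fun z : (Fin m → Fin 𝔡 → ℝ) × (Fin L → Fin m → Fin m → ℝ) =>
    ((dot u (mulVec (mmul (Wat z.2 (a + k + 1)) (prodDW z.1 z.2 x (a + 1) (a + k))) v)) ^ 2) ^ p
    with hR
  have hRm : Measurable R := by
    simp only [hR, mulVec_mmul]
    have := measurable_mulVec ((measurable_Wat (L := L) (m := m) (a + k + 1)).comp measurable_snd)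
      (measurable_prodDW (𝔡 := 𝔡) x (a + 1) (a + k) v)
    refine Measurable.pow_const (Measurable.pow_const ?_ 2) p
    unfold dot
    exact Finset.measurable_sum _ fun k _ => ((measurable_pi_apply k).comp this).const_mul _
  set F := fun z : (Fin m → Fin 𝔡 → ℝ) × (Fin L → Fin m → Fin m → ℝ) =>
    if hseq z.1 z.2 x (a + k) = 0 then 0 else ENNReal.ofReal (R z) with hF
  have hFm : Measurable F := measurable_gate x (a + k) hRm
  have h_moment : ∫⁻ z, F z ∂(initAW 𝔡 m L) ≤ ENNReal.ofReal (2 * (8 * p / m) ^ p *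
      Real.exp (-(p : ℝ)) * Real.exp (8 * p ^ 2 / m) ^ k) := by
    rw [initAW, lintegral_prod _ hFm.aemeasurable]
    calc _ ≤ ∫⁻ _, ENNReal.ofReal (2 * (8 * p / m) ^ p *
        Real.exp (-(p : ℝ)) * Real.exp (8 * p ^ 2 / m) ^ k) ∂(gaussMat m 𝔡 (2 / m)) := by
          refine lintegral_mono fun A => ?_
          refine (bilin_moment hm A x u v p hp hpm a k hk).trans (ENNReal.ofReal_le_ofReal ?_)
          have hnu : 0 ≤ ∑ j, u j ^ 2 := Finset.sum_nonneg fun j _ => sq_nonneg _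
          have hnv : 0 ≤ ∑ j, v j ^ 2 := Finset.sum_nonneg fun j _ => sq_nonneg _
          have h1 := pow_le_one₀ (n := p) hnu hu
          have h2 := pow_le_one₀ (n := p) hnv hv
          calc _ ≤ 2 * (8 * (p:ℝ) / m) ^ p * Real.exp (-(p : ℝ)) * 1 *
                (Real.exp (8 * p ^ 2 / m) ^ k * 1) := by gcongr
            _ = _ := by ring
      _ = _ := by simp
  have hM := (mul_meas_ge_le_lintegral hFm (ENNReal.ofReal (t ^ p)) (μ := initAW 𝔡 m L)).trans h_moment
  have hsub : {z : (Fin m → Fin 𝔡 → ℝ) × (Fin L → Fin m → Fin m → ℝ) |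
      hseq z.1 z.2 x (a + k) ≠ 0 ∧ t ≤ (dot u (mulVec (mmul (Wat z.2 (a + k + 1))
          (prodDW z.1 z.2 x (a + 1) (a + k))) v)) ^ 2} ⊆ {z | ENNReal.ofReal (t ^ p) ≤ F z} := by
    rintro z ⟨h1, h2⟩
    change ENNReal.ofReal (t ^ p) ≤ F z
    simp only [hF, if_neg h1, hR]
    apply ENNReal.ofReal_le_ofReal
    gcongr
  refine (measure_mono hsub).trans ?_
  have htp : 0 < t ^ p := by positivity
  rw [mul_comm, ← ENNReal.le_div_iff_mul_le (by simp [htp]) (by simp),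
    ← ENNReal.ofReal_div_of_pos htp] at hM
  refine hM.trans (ENNReal.ofReal_le_ofReal (le_of_eq ?_))
  rw [← div_div, div_pow _ t]
  ring

/-! ### Numerical estimates -/

theorem num_C : (1000 : ℝ) ≤ 8 * Real.exp 5 := by
  have h1 : Real.exp 5 = Real.exp 1 ^ 5 := by rw [← Real.exp_nat_mul]; norm_num
  have h2 : (2.7 : ℝ) ^ 5 ≤ Real.exp 1 ^ 5 := by
    gcongr
    linarith [Real.exp_one_gt_d9]
  rw [h1]
  norm_num at h2 ⊢
  linarith

/-- What the two size hypotheses on `m` and `s` are used for. -/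
theorem num_base {m L n s : ℕ} (hL : 2 ≤ L) (hn : 0 < n)
    (h1 : 8 * Real.exp 5 * (n : ℝ) * L * Real.log ((n : ℝ) * L) ≤ m) (hs : 1 ≤ s)
    (h2 : (s : ℝ) ≤ m / (8 * Real.exp 5 * L * Real.log m)) :
    500 * ((n : ℝ) * L) ≤ m ∧ 2 ≤ (n : ℝ) * L ∧ 1 ≤ Real.log m ∧
      8 * Real.exp 5 * L * (s * Real.log m) ≤ m := by
  have hC := num_C
  have hL' : (2 : ℝ) ≤ L := by exact_mod_cast hL
  have hn' : (1 : ℝ) ≤ n := by exact_mod_cast hn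
  have hs' : (1 : ℝ) ≤ s := by exact_mod_cast hs
  have hnL : 2 ≤ (n : ℝ) * L := by nlinarith
  have hlog : 1 / 2 ≤ Real.log ((n : ℝ) * L) := by
    have := Real.log_le_log (by norm_num) hnL
    linarith [Real.log_two_gt_d9]
  have h500 : 500 * ((n : ℝ) * L) ≤ m := by
    refine le_trans ?_ h1
    calc 500 * ((n : ℝ) * L) = 1000 * ((n : ℝ) * L) * (1 / 2) := by ring
      _ ≤ 8 * Real.exp 5 * ((n : ℝ) * L) * Real.log ((n : ℝ) * L) := by gcongr
      _ = _ := by ring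
  have hm : (1000 : ℝ) ≤ m := by linarith
  have hlm : 1 ≤ Real.log m := by
    rw [Real.le_log_iff_exp_le (by linarith)]
    linarith [Real.exp_one_lt_d9]
  refine ⟨h500, hnL, hlm, ?_⟩
  have hpos : 0 < 8 * Real.exp 5 * L * Real.log m := by positivity
  rw [le_div_iff₀ hpos] at h2
  calc _ = (s : ℝ) * (8 * Real.exp 5 * L * Real.log m) := by ring
    _ ≤ m := h2

/-- The tail bound at moment order `p = ⌈lam⌉` and threshold `16 e¹⁰ lam / m`: the base of the power
is at most `e⁻¹⁰`, and the growth `exp (8 p² k / m)` over the layers is absorbed by `exp (-p)`. -/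
theorem num_tail {m L k : ℕ} {lam : ℝ} (hm : (0 : ℝ) < m) (h1 : 1 ≤ lam) (hk : k ≤ L)
    (h2 : 8 * Real.exp 5 * L * lam ≤ m) :
    2 * (8 * (⌈lam⌉₊ : ℝ) / (m * (16 * Real.exp 10 * lam / m))) ^ ⌈lam⌉₊ *
      Real.exp (-(⌈lam⌉₊ : ℝ)) * Real.exp (8 * (⌈lam⌉₊ : ℝ) ^ 2 / m) ^ k ≤
      2 * Real.exp (-10 * lam) := by
  have hp1 : lam ≤ (⌈lam⌉₊ : ℝ) := Nat.le_ceil lam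
  have hp2 : (⌈lam⌉₊ : ℝ) ≤ 2 * lam := by
    have := Nat.ceil_lt_add_one (show 0 ≤ lam by linarith)
    linarith
  generalize ⌈lam⌉₊ = p at hp1 hp2 ⊢
  have hp0 : (0 : ℝ) < p := by linarith
  have hC := num_C
  have hk' : (k : ℝ) ≤ L := by exact_mod_cast hk
  have e1 : 8 * (p : ℝ) / (m * (16 * Real.exp 10 * lam / m)) ≤ Real.exp (-10) := by
    rw [mul_div_cancel₀ _ hm.ne', Real.exp_neg, div_le_iff₀ (by positivity)]
    have : (Real.exp 10)⁻¹ * (16 * Real.exp 10 * lam) = 16 * lam := by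
      field_simp
    rw [this]
    linarith
  have e2 : (k : ℝ) * (8 * (p : ℝ) ^ 2 / m) ≤ p := by
    rw [← mul_div_assoc, div_le_iff₀ hm]
    calc (k : ℝ) * (8 * (p : ℝ) ^ 2) = p * (8 * k * p) := by ring
      _ ≤ p * (8 * L * (2 * lam)) := by gcongr
      _ = p * (16 * L * lam) := by ring
      _ ≤ p * (8 * Real.exp 5 * L * lam) := by gcongr; linarith
      _ ≤ p * m := by gcongr
  calc 2 * (8 * (p : ℝ) / (m * (16 * Real.exp 10 * lam / m))) ^ p *
      Real.exp (-(p : ℝ)) * Real.exp (8 * (p : ℝ) ^ 2 / m) ^ k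
      ≤ 2 * Real.exp (-10) ^ p * Real.exp (-(p : ℝ)) * Real.exp p := by
        rw [← Real.exp_nat_mul (8 * (p : ℝ) ^ 2 / m) k]
        gcongr
    _ = 2 * Real.exp (-10 * p) := by
        rw [← Real.exp_nat_mul, mul_assoc, ← Real.exp_add, mul_assoc, ← Real.exp_add]
        congr 2
        ring
    _ ≤ _ := by
        gcongr 2 * Real.exp ?_
        linarith

/-- The number of tuples (sample, layers, pair of grid vectors) is at most `m² m^(6 s) ≤ e^(8 lam)`
with `lam = s log m`, which the tail bound `2 e^(-10 lam)` beats. -/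
theorem num_count {m L n s : ℕ} (hn : 0 < n) (hs : 1 ≤ s)
    (h500 : 500 * ((n : ℝ) * L) ≤ m) (hnL : 2 ≤ (n : ℝ) * L) (hlm : 1 ≤ Real.log m) :
    ((n * (L * (L * ((m * (2 * m + 1)) ^ s * (m * (2 * m + 1)) ^ s))) : ℕ) : ℝ) *
      (2 * Real.exp (-10 * (s * Real.log m))) ≤ 1 / 2 * Real.exp (-(s * Real.log m)) := by
  have hm : (1000 : ℝ) ≤ m := by linarith
  have hm0 : (0 : ℝ) < m := by linarith
  have hn' : (1 : ℝ) ≤ n := by exact_mod_cast hn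
  have hs' : (1 : ℝ) ≤ s := by exact_mod_cast hs
  have hL0 : (0 : ℝ) ≤ L := by positivity
  have hnLm : (n : ℝ) * L ≤ m := by linarith
  have hLm : (L : ℝ) ≤ m := by nlinarith
  have hgrid : (m : ℝ) * (2 * m + 1) ≤ (m : ℝ) ^ 3 := by nlinarith [mul_pos hm0 hm0]
  have hmexp : Real.exp (Real.log m) = m := Real.exp_log hm0
  have hcount : ((n * (L * (L * ((m * (2 * m + 1)) ^ s * (m * (2 * m + 1)) ^ s))) : ℕ) : ℝ) ≤
      Real.exp (8 * (s * Real.log m)) := by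
    push_cast
    calc (n : ℝ) * (L * (L * ((m * (2 * m + 1)) ^ s * (m * (2 * m + 1)) ^ s)))
        = (n * L) * L * (((m : ℝ) * (2 * m + 1)) ^ s * ((m : ℝ) * (2 * m + 1)) ^ s) := by ring
      _ ≤ m * m * (((m : ℝ) ^ 3) ^ s * ((m : ℝ) ^ 3) ^ s) := by gcongr
      _ = (m : ℝ) ^ (2 + 6 * s) := by ring
      _ = Real.exp ((2 + 6 * s : ℕ) * Real.log m) := by rw [Real.exp_nat_mul, hmexp]
      _ ≤ Real.exp (8 * (s * Real.log m)) := by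
        refine Real.exp_le_exp.mpr ?_
        push_cast
        nlinarith
  have h4 : Real.exp (-(s * Real.log m)) ≤ 1 / 4 := by
    have : Real.exp (-(s * Real.log m)) ≤ Real.exp (-Real.log m) := by
      gcongr
      nlinarith
    refine this.trans ?_
    rw [Real.exp_neg, hmexp, one_div]
    gcongr
    linarith
  calc _ ≤ Real.exp (8 * (s * Real.log m)) * (2 * Real.exp (-10 * (s * Real.log m))) := by gcongr
    _ = 2 * (Real.exp (-(s * Real.log m)) * Real.exp (-(s * Real.log m))) := by
        rw [mul_left_comm, ← Real.exp_add, ← Real.exp_add]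
        congr 2
        ring
    _ ≤ 2 * (1 / 4 * Real.exp (-(s * Real.log m))) := by gcongr
    _ = _ := by ring

/-- The total probability of the events of vanishing activations. -/
theorem num_zero {m L n : ℕ} {lam : ℝ} (h500 : 500 * ((n : ℝ) * L) ≤ m) (hnL : 2 ≤ (n : ℝ) * L)
    (hL : 2 ≤ L) (hlam : 10 * lam ≤ m) :
    (n : ℝ) * ((L + 1) * (1 / 2) ^ m) ≤ 1 / 2 * Real.exp (-lam) := by
  have hL' : (2 : ℝ) ≤ L := by exact_mod_cast hL
  have hn0 : (0 : ℝ) ≤ n := by positivity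
  have hm : (1000 : ℝ) ≤ m := by linarith
  have h1 : (n : ℝ) * (L + 1) ≤ m := by nlinarith
  have h2 : (m : ℝ) ≤ 1 / 2 * Real.exp (m / 2) := by
    have := Real.quadratic_le_exp_of_nonneg (show (0 : ℝ) ≤ m / 2 by positivity)
    nlinarith
  have h3 : (1 / 2 : ℝ) ^ m ≤ Real.exp (-(6 / 10) * m) := by
    have h : (1 / 2 : ℝ) = Real.exp (-Real.log 2) := by
      rw [Real.exp_neg, Real.exp_log (by norm_num), one_div]
    rw [h, ← Real.exp_nat_mul]
    refine Real.exp_le_exp.mpr ?_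
    nlinarith [Real.log_two_gt_d9]
  calc (n : ℝ) * ((L + 1) * (1 / 2) ^ m) = (n : ℝ) * (L + 1) * (1 / 2) ^ m := by ring
    _ ≤ 1 / 2 * Real.exp (m / 2) * Real.exp (-(6 / 10) * m) := by
        exact mul_le_mul (h1.trans h2) h3 (by positivity) (by positivity)
    _ = 1 / 2 * Real.exp (-(m / 10)) := by
        rw [mul_assoc, ← Real.exp_add]
        congr 2
        ring
    _ ≤ _ := by
        gcongr
        linarith

/-! ### Union bound -/

/-- The event that the bilinear form of layers `a+1, …, a+k+1` exceeds its threshold at a fixed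
pair of grid vectors of the unit ball, while the activations feeding its last layer do not
vanish. -/
def badEvent (x : Fin 𝔡 → ℝ) (s : ℕ) (t : ℝ) (a k : ℕ)
    (q q' : Fin s → Fin m × Fin (2 * m + 1)) :
    Set ((Fin m → Fin 𝔡 → ℝ) × (Fin L → Fin m → Fin m → ℝ)) :=
  {z | a + k < L ∧ ∑ j, gridVec m s q j ^ 2 ≤ 1 ∧ ∑ j, gridVec m s q' j ^ 2 ≤ 1 ∧
    hseq z.1 z.2 x (a + k) ≠ 0 ∧
    t ≤ (dot (gridVec m s q) (mulVec (mmul (Wat z.2 (a + k + 1))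
      (prodDW z.1 z.2 x (a + 1) (a + k))) (gridVec m s q'))) ^ 2}

theorem badEvent_prob (hm : 0 < m) (x : Fin 𝔡 → ℝ) (s : ℕ) (a k : ℕ)
    (q q' : Fin s → Fin m × Fin (2 * m + 1)) {lam : ℝ} (h1 : 1 ≤ lam)
    (h2 : 8 * Real.exp 5 * L * lam ≤ m) :
    initAW 𝔡 m L (badEvent x s (16 * Real.exp 10 * lam / m) a k q q') ≤
      ENNReal.ofReal (2 * Real.exp (-10 * lam)) := by
  have hm' : (0 : ℝ) < m := by exact_mod_cast hm
  by_cases h : a + k < L ∧ ∑ j, gridVec m s q j ^ 2 ≤ 1 ∧ ∑ j, gridVec m s q' j ^ 2 ≤ 1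
  · obtain ⟨hk, hq, hq'⟩ := h
    have hp : 1 ≤ ⌈lam⌉₊ := Nat.one_le_ceil_iff.mpr (by linarith)
    have hpm : (⌈lam⌉₊ : ℝ) / m ≤ 1 / 8 := by
      have := Nat.ceil_lt_add_one (show 0 ≤ lam by linarith)
      have hL : (1 : ℝ) ≤ L := by exact_mod_cast (by omega : 1 ≤ L)
      have : 1000 * 1 * lam ≤ 8 * Real.exp 5 * L * lam := by
        gcongr
        exact num_C
      rw [div_le_iff₀ hm']
      linarith
    refine (measure_mono ?_).trans ((tail_bound hm x _ _ hq hq' ⌈lam⌉₊ hp hpm a k hk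
      (16 * Real.exp 10 * lam / m) (by positivity)).trans
      (ENNReal.ofReal_le_ofReal (num_tail hm' h1 (by omega) h2)))
    rintro z ⟨-, -, -, h⟩
    exact h
  · have : badEvent (m := m) (L := L) x s (16 * Real.exp 10 * lam / m) a k q q' = ∅ := by
      ext z
      simp only [badEvent, Set.mem_ofPred_eq, Set.mem_empty_iff_false, iff_false]
      rintro ⟨h1, h2, h3, -⟩
      exact h ⟨h1, h2, h3⟩
    rw [this, measure_empty]
    exact zero_le

/-- Outside the bad events of one sample, its bilinear forms are bounded on all sparse vectors. The
bad events are indexed from zero: layers `a..b` of the theorem correspond to `a - 1` and `k = b - a`. -/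
theorem good_of_not_bad (hm : 0 < m) (s : ℕ) (hs : 16 * (s : ℝ) ≤ (m : ℝ) ^ 2)
    (x : Fin 𝔡 → ℝ) (t : ℝ)
    (z : (Fin m → Fin 𝔡 → ℝ) × (Fin L → Fin m → Fin m → ℝ))
    (h0 : hseq z.1 z.2 x L ≠ 0) (hz : ∀ (a k : Fin L) q q', z ∉ badEvent x s t a k q q')
    (a b : ℕ) (ha : 1 ≤ a) (hab : a ≤ b) (hb : b ≤ L) (u v : Fin m → ℝ)
    (hu : l0 u ≤ s) (hv : l0 v ≤ s) :
    |dot u (mulVec (mmul (Wat z.2 b) (prodDW z.1 z.2 x a (b - 1))) v)| ≤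
      2 * Real.sqrt t * l2 u * l2 v := by
  obtain ⟨a, rfl⟩ : ∃ a', a = a' + 1 := ⟨a - 1, by omega⟩
  obtain ⟨k, rfl⟩ : ∃ k, b = a + k + 1 := ⟨b - a - 1, by omega⟩
  rw [Nat.add_sub_cancel]
  refine net_bound hm s hs _ _ (fun q q' hq hq' => ?_) u v hu hv
  refine Real.abs_le_sqrt ?_
  by_contra hlt
  exact hz ⟨a, by omega⟩ ⟨k, by omega⟩ q q' ⟨show a + k < L by omega, hq, hq',
    fun h => h0 (hseq_zero_mono _ _ _ _ _ (show a + k ≤ L by omega) h), (not_le.mp hlt).le⟩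

/-- Lemma 7.2 d, sparse bilinear bound for intermediate layers. -/
theorem statement7 :
    ∃ C c : ℝ, 0 < C ∧ 0 < c ∧
      ∀ (𝔡 m L n : ℕ) (h𝔡 : 0 < 𝔡) (hL : 2 ≤ L) (hm : 0 < m) (hn : 0 < n)
        (x : Fin n → Fin 𝔡 → ℝ), (∀ i, l2 (x i) = 1) →
        C * (n : ℝ) * (L : ℝ) * Real.log ((n : ℝ) * (L : ℝ)) ≤ (m : ℝ) →
        ∀ s : ℕ, 1 ≤ s → (s : ℝ) ≤ (m : ℝ) / (C * (L : ℝ) * Real.log m) →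
        ENNReal.ofReal (1 - Real.exp (-(c * (s : ℝ) * Real.log m))) ≤
          initAW 𝔡 m L
            {z | ∀ (i : Fin n) (a b : ℕ), 1 ≤ a → a ≤ b → b ≤ L →
              ∀ u v : Fin m → ℝ, l0 u ≤ s → l0 v ≤ s →
                |dot u (mulVec (mmul (Wat z.2 b) (prodDW z.1 z.2 (x i) a (b - 1))) v)| ≤
                  C * l2 u * l2 v * Real.sqrt ((s : ℝ) * Real.log m / (m : ℝ))} := by
  refine ⟨8 * Real.exp 5, 1, by positivity, one_pos, ?_⟩
  intro 𝔡 m L n h𝔡 hL hm hn x hx h1 s hs h2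
  obtain ⟨h500, hnL, hlm, hlamC⟩ := num_base hL hn h1 hs h2
  have hm1000 : (1000 : ℝ) ≤ m := by linarith
  have hs1 : (1 : ℝ) ≤ s := by exact_mod_cast hs
  have hL2 : (2 : ℝ) ≤ L := by exact_mod_cast hL
  have hlam1 : 1 ≤ s * Real.log m := by nlinarith
  have hlam10 : 1000 * (s * Real.log m) ≤ m := by
    refine le_trans ?_ hlamC
    calc 1000 * (s * Real.log m) = 1000 * 1 * (s * Real.log m) := by ring
      _ ≤ 8 * Real.exp 5 * L * (s * Real.log m) := by
        gcongr
        · exact num_C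
        · linarith
  have hs16 : 16 * (s : ℝ) ≤ (m : ℝ) ^ 2 := by nlinarith
  set lam : ℝ := s * Real.log m with hlam
  -- the factor `16 e¹⁰` is `(C / 2)²`: the net argument doubles the grid bound `√t`
  set t : ℝ := 16 * Real.exp 10 * lam / m with ht
  have hsqrt : 2 * Real.sqrt t = 8 * Real.exp 5 * Real.sqrt (lam / m) := by
    have : t = (4 * Real.exp 5) ^ 2 * (lam / m) := by
      rw [ht, mul_pow, ← Real.exp_nat_mul]
      norm_num
      ring
    rw [this, Real.sqrt_mul (by positivity), Real.sqrt_sq (by positivity)]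
    ring
  set good := {z : (Fin m → Fin 𝔡 → ℝ) × (Fin L → Fin m → Fin m → ℝ) |
    ∀ (i : Fin n) (a b : ℕ), 1 ≤ a → a ≤ b → b ≤ L →
      ∀ u v : Fin m → ℝ, l0 u ≤ s → l0 v ≤ s →
        |dot u (mulVec (mmul (Wat z.2 b) (prodDW z.1 z.2 (x i) a (b - 1))) v)| ≤
          8 * Real.exp 5 * l2 u * l2 v * Real.sqrt (lam / m)} with hgood
  let ι := Fin n × Fin L × Fin L × (Fin s → Fin m × Fin (2 * m + 1)) ×
    (Fin s → Fin m × Fin (2 * m + 1))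
  let E0 : Fin n → Set ((Fin m → Fin 𝔡 → ℝ) × (Fin L → Fin m → Fin m → ℝ)) :=
    fun i => {z | hseq z.1 z.2 (x i) L = 0}
  let E1 : ι → Set ((Fin m → Fin 𝔡 → ℝ) × (Fin L → Fin m → Fin m → ℝ)) :=
    fun j => badEvent (x j.1) s t j.2.1 j.2.2.1 j.2.2.2.1 j.2.2.2.2
  have hsub : goodᶜ ⊆ (⋃ i, E0 i) ∪ ⋃ j, E1 j := by
    intro z hz
    by_contra hcon
    refine hz ?_
    simp only [Set.mem_union, Set.mem_iUnion, not_or, not_exists] at hcon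
    intro i a b ha hab hb u v hu hv
    refine (good_of_not_bad hm s hs16 (x i) t z (hcon.1 i)
      (fun a k q q' => hcon.2 (i, a, k, q, q')) a b ha hab hb u v hu hv).trans (le_of_eq ?_)
    rw [hsqrt]
    ring
  have hE0 : initAW 𝔡 m L (⋃ i, E0 i) ≤ ENNReal.ofReal (1 / 2 * Real.exp (-lam)) := by
    have hx0 : ∀ i, x i ≠ 0 := by
      intro i h
      have := hx i
      rw [h] at this
      simp [l2] at this
    refine (measure_iUnion_fintype_le _ _).trans
      ((Finset.sum_le_card_nsmul _ _ _ fun i _ => zero_prob hm (x i) (hx0 i)).trans ?_)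
    have hof : ((L : ENNReal) + 1) * (1 / 2) ^ m = ENNReal.ofReal ((L + 1) * (1 / 2) ^ m) := by
      rw [ENNReal.ofReal_mul (by positivity), ENNReal.ofReal_pow (by positivity),
        ENNReal.ofReal_add (by positivity) zero_le_one, ENNReal.ofReal_natCast,
        ENNReal.ofReal_one, ENNReal.ofReal_div_of_pos two_pos]
      simp
    rw [hof, nsmul_eq_mul, Finset.card_univ, Fintype.card_fin, ← ENNReal.ofReal_natCast n,
      ← ENNReal.ofReal_mul (by positivity)]
    exact ENNReal.ofReal_le_ofReal (num_zero h500 hnL hL (by linarith))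
  have hE1 : initAW 𝔡 m L (⋃ j, E1 j) ≤ ENNReal.ofReal (1 / 2 * Real.exp (-lam)) := by
    refine (measure_iUnion_fintype_le _ _).trans
      ((Finset.sum_le_card_nsmul _ _ _ fun j _ =>
        badEvent_prob hm (x j.1) s j.2.1 j.2.2.1 j.2.2.2.1 j.2.2.2.2 hlam1 hlamC).trans ?_)
    have hcard : Finset.card (Finset.univ : Finset ι) =
        n * (L * (L * ((m * (2 * m + 1)) ^ s * (m * (2 * m + 1)) ^ s))) := by
      simp [ι]
    rw [hcard, nsmul_eq_mul, ← ENNReal.ofReal_natCast, ← ENNReal.ofReal_mul (by positivity)]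
    exact ENNReal.ofReal_le_ofReal (num_count hn hs h500 hnL hlm)
  have hbad : initAW 𝔡 m L goodᶜ ≤ ENNReal.ofReal (Real.exp (-lam)) := by
    refine (measure_mono hsub).trans ((measure_union_le _ _).trans ((add_le_add hE0 hE1).trans ?_))
    rw [← ENNReal.ofReal_add (by positivity) (by positivity)]
    exact ENNReal.ofReal_le_ofReal (by linarith)
  -- subadditivity suffices here, so measurability of `good` is not needed
  have hone : (1 : ENNReal) ≤ initAW 𝔡 m L good + initAW 𝔡 m L goodᶜ := by
    rw [← measure_univ (μ := initAW 𝔡 m L), ← Set.union_compl_self good]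
    exact measure_union_le _ _
  have hexp : 1 * (s : ℝ) * Real.log m = lam := by rw [one_mul]
  rw [hexp, ENNReal.ofReal_sub _ (Real.exp_nonneg _), ENNReal.ofReal_one, tsub_le_iff_right]
  exact hone.trans (by gcongr)

end DNNPaper
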